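/- For every nonnegative integer a, the number of plane partitions contained in a 2a×2a×2a box which are both cyclically symmetric and self-complementary equals the square of the number of plane partitions contained in that box which are both totally symmetric and self-complementary. (Equation (1.4): CSSC(2a,2a,2a) = TSSC(2a,2a,2a)².) -/

import Mathlib

/-- The transpose of (the diagram of) a plane partition contained in an `a × a × c` box:
`(i,j,k)` is in the transpose iff `(j,i,k)` is in `T`. -/
def ppTranspose {a c : ℕ} (T : Set (Fin a × Fin a × Fin c)) : Set (Fin a × Fin a × Fin c) :=
  {x | (x.2.1, x.1, x.2.2) ∈ T}

/-- The cyclic shift of (the diagram of) a plane partition contained in an `n × n × n` box: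
`(i,j,k)` is in the shift iff `(j,k,i)` is in `T`.  `T` is cyclically symmetric iff it equals
its cyclic shift. -/
def ppCycle {n : ℕ} (T : Set (Fin n × Fin n × Fin n)) : Set (Fin n × Fin n × Fin n) :=
  {x | (x.2.1, x.2.2, x.1) ∈ T}

/-- The complement of (the diagram of) a plane partition contained in an `a × b × c` box:
`(i,j,k)` is in the complement iff `(a-1-i, b-1-j, c-1-k)` is not in `T`. -/
def ppComplement {a b c : ℕ} (T : Set (Fin a × Fin b × Fin c)) : Set (Fin a × Fin b × Fin c) :=
  {x | (x.1.rev, x.2.1.rev, x.2.2.rev) ∉ T}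

/-!
Up to complementation every orbit of the cyclic rotation meets the wedge `x ≤ y ≤ z`, so a
cyclically symmetric, self-complementary plane partition is determined by its part `A` in the wedge.
In the slices `z = a + m` the boundary of `A` consists of `a` non-intersecting lattice paths, and
the condition which glues the faces `x = y` and `y = z` of the wedge says that the starting points
`i` and the end points `j` of the paths are complementary subsets of `{0, …, 2a - 1}`. Total
symmetry is invariance of `A` under the rotation of the wedge combined with complementation; then
the half `y < a` of `A` determines it, and the end points of the paths in this half are fixed.

By the Lindström–Gessel–Viennot lemma the two numbers are sums of minors. Let `E` and `O` be the
`a × 2a` matrices of coefficients of the even polynomials `(x (1 + x)) ^ m` and of the odd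
polynomials `(1 + 2 x) (x (1 + x)) ^ m`, which are eigenvectors of `v(x) ↦ v(-1 - x)`.

* The first number is the sum of the minors `det (C(j l, i k))` over complementary `i` and `j`. Up
  to sign this is the expansion of the Pfaffian of the skew part of the matrix of
  `v(x) ↦ v(-1 - x)`, and passing to the basis of eigenvectors turns it into `|det (E * Oᵀ)|`.
* The second number is the sum of the maximal minors of `E`. By the minor summation formula its
  square is `det (E * M * Eᵀ)`, where `M` has `1` on the diagonal, `2` below it and `0` above it,
  and row operations reduce this to `det (E * Oᵀ)`.
-/

namespace CSSC

open Equiv Finset Matrix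

section Pfaffian

variable {R : Type*} [CommRing R] {κ : Type*} [Fintype κ] [DecidableEq κ]

/-- The unnormalised Pfaffian `∑ σ, sign σ * ∏ k, G (σ (inl k)) (σ (inr k))`: for skew-symmetric `G`
it is `2 ^ n * n!` times the Pfaffian, where `n = card κ`. The index set `κ ⊕ κ` comes with the
perfect matching `inl k ↔ inr k`. -/
def pfaffianSum (G : Matrix (κ ⊕ κ) (κ ⊕ κ) R) : R :=
  ∑ σ : Perm (κ ⊕ κ), Perm.sign σ • ∏ k, G (σ (.inl k)) (σ (.inr k))

theorem sum_sign_smul_eq_zero {ι M : Type*} [Fintype ι] [DecidableEq ι] [AddCommGroup M]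
    (F : Perm ι → M) {x y : ι} (hxy : x ≠ y) (hF : ∀ σ, F (σ * swap x y) = F σ) :
    ∑ σ, Perm.sign σ • F σ = 0 :=
  Finset.sum_involution (fun σ _ => σ * swap x y)
    (fun σ _ => by simp [hF, Perm.sign_swap hxy])
    (fun σ _ _ h => by simp [swap_eq_one_iff, hxy] at h) (by simp) (by simp)

theorem pfaffianSum_congr_skew {G G' : Matrix (κ ⊕ κ) (κ ⊕ κ) R} (h : G - Gᵀ = G' - G'ᵀ) :
    pfaffianSum G = pfaffianSum G' := by
  have hsymm x y : (G - G') x y = (G - G') y x := by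
    have := congrFun₂ h x y
    simp only [Matrix.sub_apply, transpose_apply] at this ⊢
    linear_combination this
  have hG x y : G x y = (G - G') x y + G' x y := by simp
  simp only [pfaffianSum, hG, prod_add, smul_sum]
  rw [sum_comm, sum_eq_single ∅ _ (by simp)]
  · simp
  intro s _ hs
  obtain ⟨k₀, hk₀⟩ := nonempty_iff_ne_empty.mpr hs
  refine sum_sign_smul_eq_zero _ (Sum.inl_ne_inr (a := k₀) (b := k₀)) fun σ => ?_
  have fixes {k : κ} (hk : k ≠ k₀) :
      (σ * swap (Sum.inl k₀) (Sum.inr k₀)) (Sum.inl k) = σ (Sum.inl k) ∧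
        (σ * swap (Sum.inl k₀) (Sum.inr k₀)) (Sum.inr k) = σ (Sum.inr k) := by
    simp [swap_apply_of_ne_of_ne, hk]
  congr 1
  · refine prod_congr rfl fun k _ => ?_
    rcases eq_or_ne k k₀ with rfl | hk
    · simpa using hsymm _ _
    · rw [(fixes hk).1, (fixes hk).2]
  · refine prod_congr rfl fun k hk => ?_
    have hk : k ≠ k₀ := by rintro rfl; exact (mem_sdiff.mp hk).2 hk₀
    rw [(fixes hk).1, (fixes hk).2]

theorem sum_sign_mul_prod_eq_det (K : Matrix κ κ R) (σ : Perm κ) :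
    ∑ τ, (Perm.sign σ * Perm.sign τ) • ∏ k, K (σ k) (τ k) = K.det := by
  have h : K.det = Perm.sign σ • (K.submatrix σ id).det := by
    simp [det_permute, Units.smul_def, ← mul_assoc, ← Int.cast_mul, ← Units.val_mul]
  rw [h, ← det_transpose, det_apply, smul_sum]
  simp [mul_smul]

theorem pfaffianSum_fromBlocks (K : Matrix κ κ R) :
    pfaffianSum (fromBlocks 0 K 0 0) = (Fintype.card κ).factorial * K.det := by
  calc pfaffianSum (fromBlocks 0 K 0 0)
      = ∑ p : Perm κ × Perm κ,
          (Perm.sign p.1 * Perm.sign p.2) • ∏ k, K (p.1 k) (p.2 k) := by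
        refine (sum_of_injOn (Perm.sumCongrHom κ κ) Perm.sumCongrHom_injective.injOn
          (by simp) (fun σ _ hσ => ?_) (fun p _ => by simp [Perm.sumCongrHom])).symm
        obtain ⟨k, l, hk⟩ : ∃ k l, σ (.inl k) = .inr l := by
          by_contra! hne
          refine hσ ?_
          obtain ⟨p, hp⟩ : σ ∈ Set.range (Perm.sumCongrHom κ κ) := by
            refine Perm.mem_sumCongrHom_range_of_perm_mapsTo_inl ?_
            rintro _ ⟨k, rfl⟩
            rcases h : σ (.inl k) with l | l
            · exact ⟨l, rfl⟩
            · exact absurd h (hne k l)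
          exact ⟨p, by simp, hp⟩
        rw [prod_eq_zero (mem_univ k) (by rw [hk]; rcases σ (.inr k) <;> rfl), smul_zero]
    _ = (Fintype.card κ).factorial * K.det := by
        simp [Fintype.sum_prod_type, sum_sign_mul_prod_eq_det, Fintype.card_perm]

variable {V : Type*} [AddCommGroup V] [Module R V]

theorem prod_update_inl [DecidableEq (κ ⊕ κ)] (B : LinearMap.BilinForm R V) (v : κ ⊕ κ → V)
    (k : κ) (z : V) :
    ∏ l, B (Function.update v (.inl k) z (.inl l)) (Function.update v (.inl k) z (.inr l)) =
      B z (v (.inr k)) * ∏ l ∈ univ.erase k, B (v (.inl l)) (v (.inr l)) := by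
  rw [← mul_prod_erase univ _ (mem_univ k)]
  congr 1
  · simp
  · exact prod_congr rfl fun l hl => by simp [Function.update_of_ne, ne_of_mem_erase hl]

theorem prod_update_inr [DecidableEq (κ ⊕ κ)] (B : LinearMap.BilinForm R V) (v : κ ⊕ κ → V)
    (k : κ) (z : V) :
    ∏ l, B (Function.update v (.inr k) z (.inl l)) (Function.update v (.inr k) z (.inr l)) =
      B (v (.inl k)) z * ∏ l ∈ univ.erase k, B (v (.inl l)) (v (.inr l)) := by
  rw [← mul_prod_erase univ _ (mem_univ k)]
  congr 1
  · simp
  · exact prod_congr rfl fun l hl => by simp [Function.update_of_ne, ne_of_mem_erase hl]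

/-- The alternating form `v ↦ pfaffianSum (B (v x) (v y))`, a scalar multiple of the exterior
power of the bilinear form `B`. -/
def pfaffianForm (κ : Type*) [Fintype κ] [DecidableEq κ] (B : LinearMap.BilinForm R V) :
    V [⋀^κ ⊕ κ]→ₗ[R] R :=
  MultilinearMap.alternatization
    { toFun := fun v => ∏ k, B (v (.inl k)) (v (.inr k))
      map_update_add' := by
        rintro _ v (k | k) x y
        · simp only [prod_update_inl, map_add, LinearMap.add_apply, add_mul]
        · simp only [prod_update_inr, map_add, add_mul]
      map_update_smul' := by
        rintro _ v (k | k) c x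
        · simp only [prod_update_inl, map_smul, LinearMap.smul_apply, smul_mul_assoc]
        · simp only [prod_update_inr, map_smul, smul_mul_assoc] }

theorem pfaffianForm_apply (B : LinearMap.BilinForm R V) (v : κ ⊕ κ → V) :
    pfaffianForm κ B v = pfaffianSum (of fun x y => B (v x) (v y)) := by
  simp [pfaffianForm, pfaffianSum, MultilinearMap.alternatization_apply]

theorem map_sum_smul_eq_det {ι : Type*} [Fintype ι] [DecidableEq ι] (g : V [⋀^ι]→ₗ[R] R)
    (A : Matrix ι ι R) (v : ι → V) : g (fun x => ∑ y, A x y • v y) = A.det * g v := by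
  have h := (g.compLinearMap (Fintype.linearCombination R v)).eq_smul_basis_det (Pi.basisFun R ι)
  have hv : (fun y => Fintype.linearCombination R v (Pi.basisFun R ι y)) = v := by
    simp [Fintype.linearCombination_apply, Pi.single_apply, ite_smul]
  calc g (fun x => ∑ y, A x y • v y)
      = g.compLinearMap (Fintype.linearCombination R v) A.row := rfl
    _ = A.det * g v := by
        rw [h, Pi.basisFun_det, mul_comm]
        exact congrArg (g · * A.det) hv

theorem sum_eq_sum_orderEmbedding {m : ℕ} {Λ M : Type*} [Fintype Λ] [LinearOrder Λ]
    [AddCommMonoid M] (F : (Fin m → Λ) → M) (hF : ∀ f, ¬ Function.Injective f → F f = 0) :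
    ∑ f, F f = ∑ S : Fin m ↪o Λ, ∑ σ : Perm (Fin m), F (S ∘ σ) := by
  rw [← Fintype.sum_prod_type' (f := fun (S : Fin m ↪o Λ) (σ : Perm (Fin m)) => F (S ∘ σ))]
  refine (sum_of_injOn (fun p : (Fin m ↪o Λ) × Perm (Fin m) => (p.1 ∘ p.2 : Fin m → Λ))
    ?_ (by simp) (fun f _ hf => hF f fun hinj => hf ?_) (fun _ _ => rfl)).symm
  · rintro ⟨S, σ⟩ _ ⟨S', σ'⟩ _ (h : S ∘ σ = S' ∘ σ')
    have hrange : Set.range S = Set.range S' := by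
      rw [← σ.surjective.range_comp, h, σ'.surjective.range_comp]
    obtain rfl : S = S' := OrderEmbedding.range_inj.mp hrange
    rw [Equiv.ext fun k => S.injective (congrFun h k)]
  · have hsort : StrictMono (f ∘ Tuple.sort f) :=
      (Tuple.monotone_sort f).strictMono_of_injective (hinj.comp (Tuple.sort f).injective)
    exact ⟨(OrderEmbedding.ofStrictMono _ hsort, (Tuple.sort f)⁻¹), by simp, by ext; simp⟩

theorem map_sum_smul_eq_sum_minors {m : ℕ} {Λ : Type*} [Fintype Λ] [LinearOrder Λ]
    (g : V [⋀^Fin m]→ₗ[R] R) (w : Matrix (Fin m) Λ R) (e : Λ → V) :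
    g (fun k => ∑ p, w k p • e p) =
      ∑ S : Fin m ↪o Λ, (w.submatrix id S).det * g (e ∘ S) := by
  have hexpand : g (fun k => ∑ p, w k p • e p) = ∑ f : Fin m → Λ, (∏ k, w k (f k)) * g (e ∘ f) := by
    have h := g.toMultilinearMap.map_sum fun k p => w k p • e p
    simp only [MultilinearMap.map_smul_univ] at h
    exact h
  rw [hexpand, sum_eq_sum_orderEmbedding]
  · refine sum_congr rfl fun S _ => ?_
    simp only [← Function.comp_assoc, g.map_perm]
    rw [← det_transpose, det_apply, sum_mul]
    simp [Units.smul_def, mul_comm, mul_assoc]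
  · intro f hf
    rw [g.map_eq_zero_of_not_injective _ fun h => hf h.of_comp, mul_zero]

end Pfaffian

section SumOfMinors

variable {R : Type*} [CommRing R]

section Alternating

variable {V ι ι' : Type*} [AddCommGroup V] [Module R V]

/-- The alternating map obtained from `g` by freezing its second block of arguments to `v₂`. -/
def freezeRight (g : V [⋀^ι ⊕ ι']→ₗ[R] R) (v₂ : ι' → V) : V [⋀^ι]→ₗ[R] R where
  toFun v₁ := g (Sum.elim v₁ v₂)
  map_update_add' v i x y := by
    classical simp only [Sum.elim_update_left, g.map_update_add]
  map_update_smul' v i c x := by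
    classical simp only [Sum.elim_update_left, g.map_update_smul]
  map_eq_zero_of_eq' v i j h hij :=
    g.map_eq_zero_of_eq _ (i := .inl i) (j := .inl j) h (by simpa)

theorem freezeRight_apply (g : V [⋀^ι ⊕ ι']→ₗ[R] R) (v₁ : ι → V) (v₂ : ι' → V) :
    freezeRight g v₂ v₁ = g (Sum.elim v₁ v₂) := rfl

theorem map_sumElim_eq_sum_minors {m n : ℕ} {Λ Λ' : Type*} [Fintype Λ] [LinearOrder Λ]
    [Fintype Λ'] [LinearOrder Λ'] (g : V [⋀^Fin m ⊕ Fin n]→ₗ[R] R)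
    (w : Matrix (Fin m) Λ R) (w' : Matrix (Fin n) Λ' R) (e : Λ → V) (e' : Λ' → V) :
    g (Sum.elim (fun k => ∑ p, w k p • e p) (fun k => ∑ q, w' k q • e' q)) =
      ∑ S : Fin m ↪o Λ, ∑ S' : Fin n ↪o Λ',
        (w.submatrix id S).det * (w'.submatrix id S').det * g (Sum.elim (e ∘ S) (e' ∘ S')) := by
  have swapped (v : Fin m → V) (v' : Fin n → V) :
      g (Sum.elim v v') = freezeRight (g.domDomCongr (Equiv.sumComm _ _)) v v' := by
    rw [freezeRight_apply, g.domDomCongr_apply]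
    congr 1
    ext (k | k) <;> rfl
  rw [← freezeRight_apply, map_sum_smul_eq_sum_minors]
  refine sum_congr rfl fun S _ => ?_
  rw [freezeRight_apply, swapped, map_sum_smul_eq_sum_minors, mul_sum]
  exact sum_congr rfl fun S' _ => by rw [← swapped, mul_assoc]

end Alternating

theorem pfaffianForm_toBilin' {κ ι : Type*} [Fintype κ] [DecidableEq κ] [Fintype ι]
    [DecidableEq ι] (G : Matrix ι ι R) (W : Matrix (κ ⊕ κ) ι R) :
    pfaffianForm κ (toBilin' G) W.row = pfaffianSum (W * G * Wᵀ) := by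
  rw [pfaffianForm_apply]
  congr 1
  ext x y
  rw [of_apply, toBilin'_apply', dotProduct_mulVec, mul_apply']
  rfl

theorem pfaffianSum_submatrix {κ ι : Type*} [Fintype κ] [DecidableEq κ] [Fintype ι]
    [DecidableEq ι] (G : Matrix ι ι R) (r : κ ⊕ κ → ι) :
    pfaffianSum (G.submatrix r r) = pfaffianForm κ (toBilin' G) fun x => Pi.single (r x) 1 := by
  rw [pfaffianForm_apply]
  congr 1
  ext x y
  simp [toBilin'_single]

theorem pfaffianSum_mul_mul_transpose {κ : Type*} [Fintype κ] [DecidableEq κ]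
    (A G : Matrix (κ ⊕ κ) (κ ⊕ κ) R) :
    pfaffianSum (A * G * Aᵀ) = A.det * pfaffianSum G := by
  rw [← pfaffianForm_toBilin', ← G.submatrix_id_id, pfaffianSum_submatrix,
    ← map_sum_smul_eq_det]
  congr 1
  ext x y
  simp [row, Finset.sum_apply, Pi.single_apply]

/-- The sum of the maximal minors of `T`. -/
noncomputable def sumOfMinors {a : ℕ} {Λ : Type*} [Fintype Λ] [LinearOrder Λ]
    (T : Matrix (Fin a) Λ R) : R :=
  ∑ S : Fin a ↪o Λ, (T.submatrix id S).det

variable (R)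

/-- The incidence matrix of the strict order `p < q`. -/
def ltMatrix (Λ : Type*) [LinearOrder Λ] : Matrix Λ Λ R :=
  of fun p q => if p < q then 1 else 0

/-- A Gram matrix on two copies of `Λ` that every pair of increasing maps `Fin a → Λ` restricts to
the same Gram matrix on two copies of `Fin a`. -/
def doubledLtMatrix (Λ : Type*) [LinearOrder Λ] : Matrix (Λ ⊕ Λ) (Λ ⊕ Λ) R :=
  fromBlocks (ltMatrix R Λ) (of fun _ _ => 1) 0 (ltMatrix R Λ)ᵀ

/-- The Gram matrix of the minor summation formula `sumOfMinors_sq`: `1` on the diagonal, `2` below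
it and `0` above it. -/
def minorSumMatrix (Λ : Type*) [LinearOrder Λ] : Matrix Λ Λ R :=
  of (fun _ _ => 1) + (ltMatrix R Λ)ᵀ - ltMatrix R Λ

variable {R} {Λ : Type*} [LinearOrder Λ]

theorem doubledLtMatrix_submatrix {a : ℕ} (S S' : Fin a ↪o Λ) :
    (doubledLtMatrix R Λ).submatrix (Sum.map S S') (Sum.map S S') = doubledLtMatrix R (Fin a) := by
  ext (k | k) (l | l) <;> simp [doubledLtMatrix, ltMatrix]

theorem sumOfMinors_one {a : ℕ} : sumOfMinors (1 : Matrix (Fin a) (Fin a) R) = 1 := by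
  have (S : Fin a ↪o Fin a) : S = RelEmbedding.refl _ := OrderEmbedding.range_inj.mp <| by
    rw [(Finite.surjective_of_injective S.injective).range_eq]; simp
  rw [sumOfMinors, Fintype.sum_eq_single (RelEmbedding.refl _) fun S hS => (hS (this S)).elim]
  exact (congrArg det (submatrix_id_id (1 : Matrix (Fin a) (Fin a) R))).trans det_one

theorem det_minorSumMatrix {a : ℕ} : (minorSumMatrix R (Fin a)).det = 1 := by
  rw [det_of_isLowerTriangular]
  · simp [minorSumMatrix, ltMatrix]
  · intro i j (hij : i < j)
    simp [minorSumMatrix, ltMatrix, hij, hij.not_gt]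

variable [Fintype Λ]

theorem pfaffianSum_fromBlocks_mul_doubledLtMatrix {a : ℕ} (T : Matrix (Fin a) Λ R) :
    pfaffianSum (fromBlocks T 0 0 T * doubledLtMatrix R Λ * (fromBlocks T 0 0 T)ᵀ) =
      sumOfMinors T ^ 2 * pfaffianSum (doubledLtMatrix R (Fin a)) := by
  have hrow : (fromBlocks T 0 0 T).row = Sum.elim
      (fun k => ∑ p, T k p • (Pi.single (.inl p) 1 : Λ ⊕ Λ → R))
      (fun k => ∑ q, T k q • (Pi.single (.inr q) 1 : Λ ⊕ Λ → R)) := by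
    ext (k | k) (p | p) <;> simp [row, Finset.sum_apply, Pi.single_apply]
  rw [← pfaffianForm_toBilin', hrow, map_sumElim_eq_sum_minors, sumOfMinors, sq, sum_mul_sum]
  simp only [sum_mul]
  refine sum_congr rfl fun S _ => sum_congr rfl fun S' _ => ?_
  rw [← doubledLtMatrix_submatrix S S', pfaffianSum_submatrix]
  congr 2
  ext (k | k) : 1 <;> rfl

variable [IsDomain R] [CharZero R]

-- The change of basis `(u, u') ↦ (u + u', u - u')` makes both diagonal blocks symmetric.
theorem pfaffianSum_fromBlocks_transpose {κ : Type*} [Fintype κ] [DecidableEq κ]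
    (X : Matrix κ κ R) {J : Matrix κ κ R} (hJ : Jᵀ = J) :
    pfaffianSum (fromBlocks X J 0 Xᵀ) = (Fintype.card κ).factorial * (J + Xᵀ - X).det := by
  have hdet : (fromBlocks 1 1 1 (-1) : Matrix (κ ⊕ κ) (κ ⊕ κ) R).det =
      (-2) ^ Fintype.card κ := by
    rw [det_fromBlocks_one₁₁, Matrix.mul_one, show (-1 - 1 : Matrix κ κ R) =
      (-2 : R) • 1 by rw [neg_smul, two_smul]; abel, det_smul, det_one, mul_one]
  have hskew : pfaffianSum (fromBlocks 1 1 1 (-1) * fromBlocks X J 0 Xᵀ * (fromBlocks 1 1 1 (-1))ᵀ)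
      = pfaffianSum (fromBlocks 0 ((-2 : R) • (J + Xᵀ - X)) 0 0) := by
    apply pfaffianSum_congr_skew
    simp only [fromBlocks_transpose, fromBlocks_multiply, one_mul, mul_zero, add_zero,
      transpose_one, transpose_neg, mul_one, mul_neg, neg_mul, neg_add_rev, neg_neg, transpose_add,
      hJ, transpose_transpose, sub_eq_add_neg, fromBlocks_neg, fromBlocks_add, smul_add, neg_smul,
      two_smul, smul_neg, transpose_zero, neg_zero, zero_add, fromBlocks_inj]
    refine ⟨?_, ?_, ?_, ?_⟩ <;> abel
  rw [pfaffianSum_mul_mul_transpose, pfaffianSum_fromBlocks, det_smul, hdet] at hskew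
  refine mul_left_cancel₀ (pow_ne_zero (Fintype.card κ) (neg_ne_zero.mpr two_ne_zero)) ?_
  rw [hskew]
  ring

theorem sumOfMinors_sq_mul_pfaffianSum {a : ℕ} (T : Matrix (Fin a) Λ R) :
    sumOfMinors T ^ 2 * pfaffianSum (doubledLtMatrix R (Fin a)) =
      a.factorial * (T * minorSumMatrix R Λ * Tᵀ).det := by
  set J : Matrix (Fin a) (Fin a) R := T * (of fun _ _ => 1 : Matrix Λ Λ R) * Tᵀ with hJ
  have hJt : Jᵀ = J := by
    simp only [hJ, transpose_mul, Matrix.mul_assoc, transpose_transpose]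
    rfl
  have hgram : fromBlocks T 0 0 T * doubledLtMatrix R Λ * (fromBlocks T 0 0 T)ᵀ =
      fromBlocks (T * ltMatrix R Λ * Tᵀ) J 0 (T * ltMatrix R Λ * Tᵀ)ᵀ := by
    simp [doubledLtMatrix, fromBlocks_transpose, fromBlocks_multiply, hJ, Matrix.mul_assoc]
  rw [← pfaffianSum_fromBlocks_mul_doubledLtMatrix, hgram, pfaffianSum_fromBlocks_transpose _ hJt,
    Fintype.card_fin, minorSumMatrix]
  simp [hJ, Matrix.mul_sub, Matrix.sub_mul, Matrix.mul_add, Matrix.add_mul, Matrix.mul_assoc]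

theorem sumOfMinors_sq {a : ℕ} (T : Matrix (Fin a) Λ R) :
    sumOfMinors T ^ 2 = (T * minorSumMatrix R Λ * Tᵀ).det := by
  have hconst : pfaffianSum (doubledLtMatrix R (Fin a)) = a.factorial := by
    simpa [sumOfMinors_one, det_minorSumMatrix] using
      sumOfMinors_sq_mul_pfaffianSum (1 : Matrix (Fin a) (Fin a) R)
  refine mul_right_cancel₀ (Nat.cast_ne_zero.mpr a.factorial_ne_zero) ?_
  rw [← hconst, sumOfMinors_sq_mul_pfaffianSum, hconst, mul_comm]

end SumOfMinors

section Shuffle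

variable {R : Type*} [CommRing R] {m : ℕ} {Λ : Type*} [LinearOrder Λ]

variable (R) in
/-- The sign of the shuffle with blocks `f` and `g`, relative to the enumeration `w` of `Λ`; it is
`0` when the entries of `f` and `g` do not exhaust `Λ`. -/
def shuffleSign (w : Fin m ⊕ Fin m ≃ Λ) (f g : Fin m → Λ) : R :=
  ((1 : Matrix Λ Λ R).submatrix w (Sum.elim f g)).det

theorem shuffleSign_eq_zero {w : Fin m ⊕ Fin m ≃ Λ} {f g : Fin m → Λ}
    (h : ¬ Function.Injective (Sum.elim f g)) : shuffleSign R w f g = 0 := by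
  simp only [Function.Injective, not_forall] at h
  obtain ⟨x, y, hxy, hne⟩ := h
  exact det_zero_of_column_eq hne fun z => congrArg ((1 : Matrix Λ Λ R) (w z)) hxy

theorem shuffleSign_comp_perm (w : Fin m ⊕ Fin m ≃ Λ) (f g : Fin m → Λ) (σ τ : Perm (Fin m)) :
    shuffleSign R w (f ∘ σ) (g ∘ τ) =
      (Perm.sign σ * Perm.sign τ : ℤˣ) • shuffleSign R w f g := by
  have h : Sum.elim (f ∘ σ) (g ∘ τ) = Sum.elim f g ∘ Perm.sumCongr σ τ := by
    ext (k | k) <;> rfl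
  have := det_permute' (Perm.sumCongr σ τ) ((1 : Matrix Λ Λ R).submatrix w (Sum.elim f g))
  rw [submatrix_submatrix] at this
  simpa [shuffleSign, h, Units.smul_def] using this

theorem shuffleSign_equiv_comp_perm (w : Fin m ⊕ Fin m ≃ Λ) (σ : Perm (Fin m ⊕ Fin m)) :
    shuffleSign R w (w ∘ σ ∘ Sum.inl) (w ∘ σ ∘ Sum.inr) = (Perm.sign σ : ℤ) := by
  have h : Sum.elim (w ∘ σ ∘ Sum.inl) (w ∘ σ ∘ Sum.inr) = w ∘ σ := by
    ext (k | k) <;> rfl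
  have := det_permute' σ (1 : Matrix (Fin m ⊕ Fin m) (Fin m ⊕ Fin m) R)
  rw [← submatrix_one_equiv w, submatrix_submatrix] at this
  simpa [shuffleSign, h] using this

variable [Fintype Λ]

theorem pfaffianSum_submatrix_equiv_eq_sum (w : Fin m ⊕ Fin m ≃ Λ) (U : Matrix Λ Λ R) :
    pfaffianSum (U.submatrix w w) =
      ∑ f : Fin m → Λ, ∑ g : Fin m → Λ, shuffleSign R w f g * ∏ k, U (f k) (g k) := by
  rw [← Fintype.sum_prod_type']
  refine sum_of_injOn (fun σ => (w ∘ σ ∘ Sum.inl, w ∘ σ ∘ Sum.inr)) ?_ (by simp) ?_ ?_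
  · intro σ _ τ _ h
    obtain ⟨hl, hr⟩ := Prod.mk.inj h
    ext (k | k) : 1
    · exact w.injective (congrFun hl k)
    · exact w.injective (congrFun hr k)
  · rintro ⟨f, g⟩ _ hfg
    rw [shuffleSign_eq_zero, zero_mul]
    intro hinj
    refine hfg ⟨ofBijective (w.symm ∘ Sum.elim f g)
      (Finite.injective_iff_bijective.mp (w.symm.injective.comp hinj)), by simp, ?_⟩
    ext <;> simp
  · intro σ _
    simp [shuffleSign_equiv_comp_perm, Units.smul_def]

theorem pfaffianSum_submatrix_equiv (w : Fin m ⊕ Fin m ≃ Λ) (U : Matrix Λ Λ R) :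
    pfaffianSum (U.submatrix w w) = m.factorial *
      ∑ i : Fin m ↪o Λ, ∑ j : Fin m ↪o Λ, shuffleSign R w i j * (U.submatrix i j).det := by
  have noninj_left (f g : Fin m → Λ) (hf : ¬ Function.Injective f) : shuffleSign R w f g = 0 :=
    shuffleSign_eq_zero fun h => hf (h.comp Sum.inl_injective)
  have noninj_right (f g : Fin m → Λ) (hg : ¬ Function.Injective g) : shuffleSign R w f g = 0 :=
    shuffleSign_eq_zero fun h => hg (h.comp Sum.inr_injective)
  have expand (i j : Fin m ↪o Λ) (σ : Perm (Fin m)) :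
      ∑ τ : Perm (Fin m), shuffleSign R w (i ∘ σ) (j ∘ τ) * ∏ k, U ((i ∘ σ) k) ((j ∘ τ) k) =
        shuffleSign R w i j * (U.submatrix i j).det := by
    rw [← sum_sign_mul_prod_eq_det _ σ, mul_sum]
    refine sum_congr rfl fun τ _ => ?_
    rw [shuffleSign_comp_perm, smul_mul_assoc, mul_smul_comm]
    rfl
  rw [pfaffianSum_submatrix_equiv_eq_sum,
    sum_eq_sum_orderEmbedding _ fun f hf => sum_eq_zero fun g _ => by simp [noninj_left f g hf],
    mul_sum]
  refine sum_congr rfl fun i _ => ?_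
  calc ∑ σ : Perm (Fin m), ∑ g : Fin m → Λ,
        shuffleSign R w (i ∘ σ) g * ∏ k, U ((i ∘ σ) k) (g k)
      = ∑ _σ : Perm (Fin m), ∑ j : Fin m ↪o Λ, shuffleSign R w i j * (U.submatrix i j).det := by
        refine sum_congr rfl fun σ _ => ?_
        rw [sum_eq_sum_orderEmbedding _ fun g hg => by simp [noninj_right _ g hg]]
        exact sum_congr rfl fun j _ => expand i j σ
    _ = _ := by simp [Fintype.card_perm]

end Shuffle

section Complementary

variable {a : ℕ}

/-- The increasing enumeration of `Fin (2 * a)` by two blocks of length `a`. -/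
def blockEquiv (a : ℕ) : Fin a ⊕ Fin a ≃ Fin (2 * a) :=
  finSumFinEquiv.trans (finCongr (two_mul a).symm)

theorem val_blockEquiv_inl (k : Fin a) : (blockEquiv a (.inl k) : ℕ) = k := by
  simp [blockEquiv]

theorem val_blockEquiv_inr (k : Fin a) : (blockEquiv a (.inr k) : ℕ) = a + k := by
  simp [blockEquiv, add_comm]

theorem elim_bijective {i j : Fin a ↪o Fin (2 * a)} (h : ∀ k l, i k ≠ j l) :
    Function.Bijective (Sum.elim i j) :=
  (Fintype.bijective_iff_injective_and_card _).mpr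
    ⟨i.injective.sumElim j.injective h, by simp [two_mul]⟩

theorem card_filter_lt_add {i j : Fin a ↪o Fin (2 * a)} (h : ∀ k l, i k ≠ j l) (l : Fin a) :
    #{k | i k < j l} + (l : ℕ) = j l := by
  have hunion : Iio (j l) = ({k | i k < j l} : Finset (Fin a)).map i.toEmbedding ∪
      (Iio l).map j.toEmbedding := by
    ext x
    obtain ⟨k | k, rfl⟩ := (elim_bijective h).surjective x
    · simp [(h k _).symm]
    · simp [h]
  have hdisj : Disjoint (({k | i k < j l} : Finset (Fin a)).map i.toEmbedding)
      ((Iio l).map j.toEmbedding) := by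
    simp only [Finset.disjoint_left, mem_map, not_exists, not_and]
    rintro _ ⟨k, _, rfl⟩ k' _ hk
    exact h k k' hk.symm
  have hcard := congrArg card hunion
  rw [card_union_of_disjoint hdisj, card_map, card_map, Fin.card_Iio, Fin.card_Iio] at hcard
  exact hcard.symm

theorem lt_iff_lt_card_filter_lt {Λ : Type*} [LinearOrder Λ] (i : Fin a ↪o Λ) (p : Λ)
    (k : Fin a) : i k < p ↔ (k : ℕ) < #{k' | i k' < p} := by
  constructor
  · intro hk
    have hsub : Iic k ⊆ ({k' | i k' < p} : Finset (Fin a)) := fun k' hk' => by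
      simpa using (i.monotone (by simpa using hk')).trans_lt hk
    simpa using card_le_card hsub
  · contrapose!
    intro hk
    have hsub : ({k' | i k' < p} : Finset (Fin a)) ⊆ Iio k := fun k' hk' => by
      simpa using (show i k' < p by simpa using hk').trans_le hk
    simpa using card_le_card hsub

theorem lt_iff_add_lt {i j : Fin a ↪o Fin (2 * a)} (h : ∀ k l, i k ≠ j l) (k l : Fin a) :
    i k < j l ↔ (k + l : ℕ) < j l := by
  rw [lt_iff_lt_card_filter_lt, ← card_filter_lt_add h l]
  omega

theorem le_iff_add_lt {i j : Fin a ↪o Fin (2 * a)} (h : ∀ k l, i k ≠ j l) (k l : Fin a) :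
    (i k : ℕ) ≤ k + l ↔ (k + l : ℕ) < j l := by
  have hcount := card_filter_lt_add (fun l k => (h k l).symm) k
  have hlt := lt_iff_lt_card_filter_lt j (i k) l
  have hne : i k < j l ↔ ¬ j l < i k :=
    ⟨fun hk => hk.not_gt, fun hk => (not_lt.mp hk).lt_of_ne (h k l)⟩
  rw [← lt_iff_add_lt h, hne, hlt]
  omega

theorem shuffleSign_eq_prod {i j : Fin a ↪o Fin (2 * a)} (h : ∀ k l, i k ≠ j l) :
    shuffleSign ℤ (blockEquiv a) i j = ∏ k : Fin a, ∏ l : Fin a, if i k < j l then 1 else -1 := by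
  have hbij := (blockEquiv a).symm.bijective.comp (elim_bijective h)
  have hsign : shuffleSign ℤ (blockEquiv a) i j =
      (Perm.sign ((blockEquiv a).permCongr (ofBijective _ hbij)) : ℤ) := by
    have := shuffleSign_equiv_comp_perm (R := ℤ) (blockEquiv a) (ofBijective _ hbij)
    rw [Perm.sign_permCongr, ← Int.cast_id (n := (Perm.sign _ : ℤ)), ← this]
    congr 1 <;> ext <;> simp
  have hprod (F : Fin (2 * a) → ℤ) : ∏ x, F x =
      (∏ k, F (blockEquiv a (.inl k))) * ∏ k, F (blockEquiv a (.inr k)) := by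
    rw [← (blockEquiv a).prod_comp, Fintype.prod_sum_type]
  have within_block (f : Fin a ↪o Fin (2 * a)) (k l : Fin a) :
      (if (k : ℕ) < l then if (f k : ℕ) < f l then 1 else -1 else 1 : ℤˣ) = 1 := by
    split_ifs with hkl hf
    exacts [rfl, absurd (f.strictMono hkl) hf, rfl]
  have cross_block (k l : Fin a) : (k : ℕ) < a + l ∧ ¬ a + (l : ℕ) < k := by omega
  rw [hsign, Perm.sign_eq_prod_prod_Ioi]
  simp only [← filter_lt_eq_Ioi, prod_filter, Units.coe_prod, hprod, Fin.lt_def,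
    val_blockEquiv_inl, val_blockEquiv_inr, Equiv.permCongr_apply, Equiv.symm_apply_apply,
    ofBijective_apply, Function.comp_apply, Equiv.apply_symm_apply, Sum.elim_inl, Sum.elim_inr,
    within_block, cross_block, add_lt_add_iff_left]
  simp [apply_ite]

theorem shuffleSign_mul_prod {i j : Fin a ↪o Fin (2 * a)} (h : ∀ k l, i k ≠ j l) :
    shuffleSign ℤ (blockEquiv a) i j * ∏ l, (-1) ^ (j l : ℕ) = ∏ l : Fin a, (-1) ^ (a + l : ℕ) := by
  rw [shuffleSign_eq_prod h, prod_comm, ← prod_mul_distrib]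
  refine prod_congr rfl fun l _ => ?_
  have hcount := card_filter_add_card_filter_not (s := univ) (fun k => i k < j l)
  rw [card_univ, Fintype.card_fin] at hcount
  rw [prod_ite, prod_const_one, one_mul, prod_const, ← pow_add, ← card_filter_lt_add h l]
  congr 1
  omega

end Complementary

section ReflectionPolynomials

open Polynomial

/-- The matrix whose rows are the first `N` coefficients of the polynomials `v k`. -/
def coeffMatrix {R ι : Type*} [Semiring R] (N : ℕ) (v : ι → R[X]) : Matrix ι (Fin N) R :=
  of fun k p => (v k).coeff p

theorem coeffMatrix_mul_transpose_apply {R ι κ : Type*} [CommRing R] {N : ℕ} (v : ι → R[X])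
    (w : κ → R[X]) (k : ι) (l : κ) : (coeffMatrix N v * (coeffMatrix N w)ᵀ) k l =
      ∑ p ∈ range N, (v k).coeff p * (w l).coeff p :=
  Fin.sum_univ_eq_sum_range (fun p => (v k).coeff p * (w l).coeff p) N

theorem sum_minorSumMatrix_mul {R : Type*} [CommRing R] {N : ℕ} (p : Fin N) (f : ℕ → R) :
    ∑ q : Fin N, minorSumMatrix R (Fin N) p q * f q = f p + 2 * ∑ q ∈ range p, f q := by
  have hentry (q : Fin N) : minorSumMatrix R (Fin N) p q * f q =
      if (q : ℕ) ∈ range (p + 1) then f q + if (q : ℕ) ∈ range p then f q else 0 else 0 := by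
    rcases lt_trichotomy q p with h | rfl | h
    · simp [minorSumMatrix, ltMatrix, h, h.not_gt, h.le, ← two_mul]
    · simp [minorSumMatrix, ltMatrix]
    · simp [minorSumMatrix, ltMatrix, h, h.not_gt, h.not_ge]
  have hsub : range (p + 1) ⊆ range N := range_subset_range.mpr p.2
  simp only [hentry]
  rw [Fin.sum_univ_eq_sum_range fun q : ℕ =>
      if q ∈ range (p + 1) then f q + if q ∈ range p then f q else 0 else 0,
    sum_ite_mem, inter_eq_right.mpr hsub, sum_add_distrib, sum_ite_mem,
    inter_eq_right.mpr (range_subset_range.mpr (Nat.le_succ _)), sum_range_succ]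
  ring

theorem coeffMatrix_mul_minorSumMatrix_mul_transpose_apply {R ι κ : Type*} [CommRing R] {N : ℕ}
    (v : ι → R[X]) (w : κ → R[X]) (k : ι) (l : κ) :
    (coeffMatrix N v * minorSumMatrix R (Fin N) * (coeffMatrix N w)ᵀ) k l =
      ∑ p ∈ range N, (v k).coeff p * ((w l).coeff p + 2 * ∑ q ∈ range p, (w l).coeff q) := by
  rw [Matrix.mul_assoc, mul_apply, ← Fin.sum_univ_eq_sum_range fun p =>
    (v k).coeff p * ((w l).coeff p + 2 * ∑ q ∈ range p, (w l).coeff q)]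
  exact sum_congr rfl fun p _ => congrArg _ (sum_minorSumMatrix_mul p _)

theorem coeffMatrix_comp {R ι : Type*} [CommRing R] {N : ℕ} {v : ι → R[X]}
    (hv : ∀ k, (v k).natDegree < N) (u : R[X]) :
    coeffMatrix N (fun k => (v k).comp u) =
      coeffMatrix N v * coeffMatrix N (fun q : Fin N => u ^ (q : ℕ)) := by
  ext k p
  rw [coeffMatrix, of_apply, Polynomial.comp, eval₂_eq_sum_range' _ (hv k), finsetSum_coeff,
    ← Fin.sum_univ_eq_sum_range fun q => (C ((v k).coeff q) * u ^ q).coeff p]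
  simp only [coeff_C_mul]
  rfl

theorem coeff_neg_one_sub_X_pow {R : Type*} [CommRing R] (q p : ℕ) :
    ((-1 - X : R[X]) ^ q).coeff p = (-1) ^ q * (q.choose p : R) := by
  have hfactor : (-1 - X : R[X]) = C (-1) * (X + 1) := by
    simp only [map_neg, map_one]
    ring
  rw [hfactor, mul_pow, ← C_pow, coeff_C_mul, coeff_X_add_one_pow]

section

variable (R : Type*) [CommRing R]

/-- The polynomials `(x (1 + x)) ^ m`, which are invariant under the reflection `x ↦ -1 - x`. -/
noncomputable def evenPoly (m : ℕ) : R[X] := (X * (1 + X)) ^ m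

/-- The polynomials `(1 + 2 x) (x (1 + x)) ^ m`, which are negated by the reflection
`x ↦ -1 - x`. -/
noncomputable def oddPoly (m : ℕ) : R[X] := (1 + 2 * X) * evenPoly R m

theorem evenPoly_comp (m : ℕ) : (evenPoly R m).comp (-1 - X) = evenPoly R m := by
  rw [evenPoly, pow_comp]
  congr 1
  simp only [mul_comp, X_comp, add_comp, one_comp]
  ring

theorem oddPoly_comp (m : ℕ) : (oddPoly R m).comp (-1 - X) = -oddPoly R m := by
  rw [oddPoly, mul_comp, evenPoly_comp]
  simp only [add_comp, one_comp, mul_comp, ofNat_comp, Nat.cast_ofNat, X_comp]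
  ring

theorem evenPoly_succ (m : ℕ) :
    evenPoly R (m + 1) = X * evenPoly R m + X * (X * evenPoly R m) := by
  rw [evenPoly, evenPoly, pow_succ]
  ring

theorem coeff_evenPoly (m p : ℕ) :
    (evenPoly R m).coeff p = if m ≤ p then (m.choose (p - m) : R) else 0 := by
  rw [evenPoly, mul_pow, coeff_X_pow_mul', add_comm]
  simp only [coeff_X_add_one_pow]

theorem coeff_oddPoly_zero (m : ℕ) : (oddPoly R m).coeff 0 = (evenPoly R m).coeff 0 := by
  simp [oddPoly, add_mul, mul_assoc]

theorem coeff_oddPoly_succ (m p : ℕ) : (oddPoly R m).coeff (p + 1) =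
    (evenPoly R m).coeff (p + 1) + 2 * (evenPoly R m).coeff p := by
  rw [oddPoly, add_mul, one_mul, coeff_add, mul_assoc, ← C_ofNat, coeff_C_mul, coeff_X_mul]

theorem natDegree_evenPoly_le (m : ℕ) : (evenPoly R m).natDegree ≤ 2 * m := by
  rw [evenPoly]
  compute_degree!
  omega

theorem natDegree_oddPoly_le (m : ℕ) : (oddPoly R m).natDegree ≤ 2 * m + 1 := by
  have hlin : (1 + 2 * X : R[X]).natDegree ≤ 1 := by compute_degree!
  have := natDegree_evenPoly_le R m
  exact natDegree_mul_le.trans (by omega)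

theorem coeff_evenPoly_self (m : ℕ) : (evenPoly R m).coeff (2 * m) = 1 := by
  rw [coeff_evenPoly, if_pos (by omega), two_mul, Nat.add_sub_cancel, Nat.choose_self, Nat.cast_one]

theorem coeff_oddPoly_self (m : ℕ) : (oddPoly R m).coeff (2 * m + 1) = 2 := by
  rw [coeff_oddPoly_succ, coeff_evenPoly_self, coeff_eq_zero_of_natDegree_lt, zero_add, mul_one]
  exact Nat.lt_succ_of_le (natDegree_evenPoly_le R m)

variable {R}

theorem sum_coeff_X_mul {N : ℕ} {v : R[X]} (hv : v.natDegree + 1 < N) (f : ℕ → R) :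
    ∑ p ∈ range N, (X * v).coeff p * f p = ∑ p ∈ range N, v.coeff p * f (p + 1) := by
  obtain ⟨n, rfl⟩ : ∃ n, N = n + 1 := ⟨N - 1, by omega⟩
  rw [sum_range_succ', sum_range_succ, coeff_eq_zero_of_natDegree_lt (by omega : v.natDegree < n)]
  simp

theorem sum_coeff_evenPoly_succ_mul {m N : ℕ} (h : 2 * m + 2 < N) (f : ℕ → R) :
    ∑ p ∈ range N, (evenPoly R (m + 1)).coeff p * f p =
      ∑ p ∈ range N, (evenPoly R m).coeff p * (f (p + 1) + f (p + 2)) := by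
  have hdeg := natDegree_evenPoly_le R m
  have hdeg' : (X * evenPoly R m).natDegree ≤ 1 + 2 * m :=
    natDegree_mul_le.trans (add_le_add natDegree_X_le hdeg)
  simp only [evenPoly_succ, coeff_add, add_mul, mul_add, sum_add_distrib]
  rw [sum_coeff_X_mul (v := X * evenPoly R m) (by omega), sum_coeff_X_mul (by omega),
    sum_coeff_X_mul (by omega)]

end

variable {R : Type*} [CommRing R]

theorem det_evenPoly_mul_minorSumMatrix (a : ℕ) :
    (coeffMatrix (2 * a) (fun m : Fin a => evenPoly R m) * minorSumMatrix R (Fin (2 * a)) *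
        (coeffMatrix (2 * a) fun m : Fin a => evenPoly R m)ᵀ).det =
      (coeffMatrix (2 * a) (fun m : Fin a => evenPoly R m) *
        (coeffMatrix (2 * a) fun m : Fin a => oddPoly R m)ᵀ).det := by
  rcases a with _ | a
  · simp
  refine det_eq_of_forall_row_eq_smul_add_pred (fun _ => 2) (fun l => ?_) fun m l => ?_ <;>
    simp only [coeffMatrix_mul_minorSumMatrix_mul_transpose_apply,
      coeffMatrix_mul_transpose_apply, Fin.val_zero, Fin.val_succ, Fin.val_castSucc]
  · refine sum_congr rfl fun p _ => ?_
    rcases p with _ | p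
    · simp [coeff_oddPoly_zero]
    · simp [coeff_evenPoly]
  · have hm : 2 * (m : ℕ) + 2 < 2 * (a + 1) := by omega
    rw [sum_coeff_evenPoly_succ_mul hm, sum_coeff_evenPoly_succ_mul hm, mul_sum,
      ← sum_add_distrib]
    refine sum_congr rfl fun p _ => ?_
    simp only [coeff_oddPoly_succ, sum_range_succ]
    ring

theorem det_coeffMatrix_eq_prod {N : ℕ} {v : Fin N → R[X]} (hv : ∀ r, (v r).natDegree ≤ r) :
    (coeffMatrix N v).det = ∏ r, (v r).coeff r := by
  rw [det_of_isLowerTriangular]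
  · rfl
  · exact fun r p (hrp : r < p) => coeff_eq_zero_of_natDegree_lt ((hv r).trans_lt hrp)

/-- The interleaving of two copies of `Fin a` as the even and the odd numbers below `2 * a`. -/
noncomputable def interleaveEquiv (a : ℕ) : Fin a ⊕ Fin a ≃ Fin (2 * a) :=
  ofBijective (Sum.elim (fun m => ⟨2 * m, by omega⟩) fun m => ⟨2 * m + 1, by omega⟩) <| by
    refine (Fintype.bijective_iff_injective_and_card _).mpr ⟨?_, by simp [two_mul]⟩
    refine Function.Injective.sumElim ?_ ?_ ?_ <;> intro m l h <;>
      simp only [Fin.ext_iff] at h <;> omega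

variable (R) in
/-- The even and the odd polynomials together: one polynomial of each degree below `2 * a`. -/
noncomputable def evenOddPoly (a : ℕ) : Fin a ⊕ Fin a → R[X] :=
  Sum.elim (fun m => evenPoly R m) fun m => oddPoly R m

theorem natDegree_evenOddPoly_le {a : ℕ} (x : Fin a ⊕ Fin a) :
    (evenOddPoly R a x).natDegree ≤ interleaveEquiv a x := by
  rcases x with m | m
  · exact natDegree_evenPoly_le R m
  · exact natDegree_oddPoly_le R m

theorem abs_det_evenOddPoly (a : ℕ) :
    |((coeffMatrix (2 * a) (evenOddPoly ℤ a)).submatrix id (blockEquiv a)).det| = 2 ^ a := by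
  have hreindex : (coeffMatrix (2 * a) (evenOddPoly ℤ a)).submatrix id (blockEquiv a) =
      (coeffMatrix (2 * a) (evenOddPoly ℤ a ∘ (interleaveEquiv a).symm)).submatrix
        (interleaveEquiv a) (blockEquiv a) := by
    ext x p
    simp [coeffMatrix]
  rw [hreindex, abs_det_submatrix_equiv_equiv, det_coeffMatrix_eq_prod fun r => by
    simpa using natDegree_evenOddPoly_le ((interleaveEquiv a).symm r),
    ← (interleaveEquiv a).prod_comp]
  simp [Fintype.prod_sum_type, evenOddPoly, interleaveEquiv, coeff_evenPoly_self,
    coeff_oddPoly_self]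

end ReflectionPolynomials

section BinomialMinors

open Polynomial

/-- The matrix of `v(x) ↦ v(-1 - x)` on polynomials of degree less than `N`, acting on rows of
coefficients. -/
noncomputable def reflectionMatrix (N : ℕ) : Matrix (Fin N) (Fin N) ℤ :=
  coeffMatrix N fun q : Fin N => (-1 - X) ^ (q : ℕ)

variable (a : ℕ)

/-- The coefficients of the even polynomials `evenPoly m`, for `m < a`. -/
noncomputable def evenMatrix : Matrix (Fin a) (Fin (2 * a)) ℤ :=
  coeffMatrix (2 * a) fun m => evenPoly ℤ m

/-- The coefficients of the odd polynomials `oddPoly m`, for `m < a`. -/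
noncomputable def oddMatrix : Matrix (Fin a) (Fin (2 * a)) ℤ :=
  coeffMatrix (2 * a) fun m => oddPoly ℤ m

theorem coeffMatrix_evenOddPoly :
    coeffMatrix (2 * a) (evenOddPoly ℤ a) = fromRows (evenMatrix a) (oddMatrix a) := by
  ext (m | m) p <;> rfl

theorem coeffMatrix_evenOddPoly_mul_reflectionMatrix :
    coeffMatrix (2 * a) (evenOddPoly ℤ a) * reflectionMatrix (2 * a) =
      fromRows (evenMatrix a) (-oddMatrix a) := by
  rw [reflectionMatrix, ← coeffMatrix_comp]
  · ext (m | m) p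
    · simp [coeffMatrix, evenOddPoly, evenPoly_comp, evenMatrix]
    · simp [coeffMatrix, evenOddPoly, oddPoly_comp, oddMatrix]
  · exact fun x => (natDegree_evenOddPoly_le x).trans_lt (interleaveEquiv a x).2

theorem pfaffianSum_evenOddPoly :
    pfaffianSum (coeffMatrix (2 * a) (evenOddPoly ℤ a) * (reflectionMatrix (2 * a))ᵀ *
        (coeffMatrix (2 * a) (evenOddPoly ℤ a))ᵀ) =
      a.factorial * ((-2) ^ a * (evenMatrix a * (oddMatrix a)ᵀ).det) := by
  rw [Matrix.mul_assoc, ← transpose_mul, coeffMatrix_evenOddPoly_mul_reflectionMatrix,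
    coeffMatrix_evenOddPoly, transpose_fromRows, fromRows_mul_fromCols,
    pfaffianSum_congr_skew (G' := fromBlocks 0 ((-2 : ℤ) • (evenMatrix a * (oddMatrix a)ᵀ)) 0 0),
    pfaffianSum_fromBlocks, det_smul, Fintype.card_fin]
  simp only [fromBlocks_transpose, sub_eq_add_neg, fromBlocks_neg, fromBlocks_add, transpose_mul,
    transpose_transpose, transpose_neg, transpose_zero, transpose_add, fromBlocks_inj,
    Matrix.mul_neg, neg_smul, two_smul]
  refine ⟨?_, ?_, ?_, ?_⟩ <;> abel

theorem abs_pfaffianSum_reflectionMatrix :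
    |pfaffianSum ((reflectionMatrix (2 * a))ᵀ.submatrix (blockEquiv a) (blockEquiv a))| =
      a.factorial * |(evenMatrix a * (oddMatrix a)ᵀ).det| := by
  have h := pfaffianSum_mul_mul_transpose
    ((coeffMatrix (2 * a) (evenOddPoly ℤ a)).submatrix id (blockEquiv a))
    ((reflectionMatrix (2 * a))ᵀ.submatrix (blockEquiv a) (blockEquiv a))
  rw [transpose_submatrix, submatrix_mul_equiv, submatrix_mul_equiv, submatrix_id_id,
    pfaffianSum_evenOddPoly] at h
  have habs := congrArg abs h
  simp only [abs_mul, abs_det_evenOddPoly, abs_pow, abs_neg, Nat.abs_ofNat, Nat.abs_cast] at habs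
  refine mul_left_cancel₀ (pow_ne_zero a two_ne_zero) ?_
  rw [← habs]
  ring

variable {a}

theorem shuffleSign_mul_det_reflectionMatrix (i j : Fin a ↪o Fin (2 * a))
    [Decidable (∀ k l, i k ≠ j l)] :
    shuffleSign ℤ (blockEquiv a) i j * ((reflectionMatrix (2 * a))ᵀ.submatrix i j).det =
      (∏ l : Fin a, (-1) ^ (a + l : ℕ)) * if ∀ k l, i k ≠ j l then
        (of fun k l => ((j l : ℕ).choose (i k) : ℤ)).det else 0 := by
  split_ifs with h
  · have hentries : (reflectionMatrix (2 * a))ᵀ.submatrix i j =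
        of fun k l => (-1) ^ (j l : ℕ) * ((j l : ℕ).choose (i k) : ℤ) := by
      ext k l
      exact coeff_neg_one_sub_X_pow _ _
    rw [hentries, ← shuffleSign_mul_prod h, mul_assoc, ← det_mul_row]
    rfl
  · rw [mul_zero, shuffleSign_eq_zero, zero_mul]
    intro hinj
    exact h fun k l hkl => Sum.inl_ne_inr (hinj hkl)

open Classical in
theorem abs_sum_binomial_minors (a : ℕ) :
    |∑ i : Fin a ↪o Fin (2 * a), ∑ j : Fin a ↪o Fin (2 * a),
        if ∀ k l, i k ≠ j l then (of fun k l => ((j l : ℕ).choose (i k) : ℤ)).det else 0| =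
      |(evenMatrix a * (oddMatrix a)ᵀ).det| := by
  have h := abs_pfaffianSum_reflectionMatrix a
  simp only [pfaffianSum_submatrix_equiv, shuffleSign_mul_det_reflectionMatrix, ← mul_sum,
    abs_mul, abs_prod, abs_pow, abs_neg, abs_one, one_pow, prod_const_one, one_mul,
    Nat.abs_cast] at h
  exact mul_left_cancel₀ (Nat.cast_ne_zero.mpr a.factorial_ne_zero) h

theorem sumOfMinors_evenMatrix_sq (a : ℕ) :
    sumOfMinors (evenMatrix a) ^ 2 = (evenMatrix a * (oddMatrix a)ᵀ).det := by
  rw [sumOfMinors_sq]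
  exact det_evenPoly_mul_minorSumMatrix a

end BinomialMinors

section LindstromGesselViennot

variable {Λ : Type*} [LinearOrder Λ] {a : ℕ}

/-- The number of paths of length `T` from `p` to `q` whose step at time `t` is taken from
`step t`, the first step being taken at time `s`. -/
def numPaths (step : ℕ → Λ → Finset Λ) : ℕ → ℕ → Λ → Λ → ℤ
  | _, 0, p, q => if p = q then 1 else 0
  | s, T + 1, p, q => ∑ p' ∈ step s p, numPaths step (s + 1) T p' q

/-- The families of non-intersecting paths of length `T` from `x` to `y`, starting at time `s`:
`f t` lists the positions at time `s + t`, and stays at `y` from time `s + T` on. -/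
def NonintersectingPaths (step : ℕ → Λ → Finset Λ) (s T : ℕ) (x y : Fin a → Λ) :
    Set (ℕ → Fin a → Λ) :=
  {f | f 0 = x ∧ (∀ t, T ≤ t → f t = y) ∧ (∀ t, StrictMono (f t)) ∧
    ∀ t < T, ∀ m, f (t + 1) m ∈ step (s + t) (f t m)}

variable {step : ℕ → Λ → Finset Λ} {s T : ℕ} {x y : Fin a → Λ}

theorem nonintersectingPaths_eq_empty (hx : ¬ StrictMono x) :
    NonintersectingPaths step s T x y = ∅ :=
  Set.eq_empty_of_forall_notMem fun _ hf => hx (hf.1 ▸ hf.2.2.1 0)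

theorem nonintersectingPaths_zero_self (hx : StrictMono x) :
    NonintersectingPaths step s 0 x x = {fun _ => x} := by
  ext f
  constructor
  · rintro ⟨_, h, _⟩
    exact funext fun t => h t t.zero_le
  · rintro rfl
    exact ⟨rfl, fun _ _ => rfl, fun _ => hx, by simp⟩

theorem nonintersectingPaths_zero_of_ne (hxy : x ≠ y) :
    NonintersectingPaths step s 0 x y = ∅ :=
  Set.eq_empty_of_forall_notMem fun _ hf => hxy (hf.1.symm.trans (hf.2.1 0 le_rfl))

/-- A family of non-intersecting paths is a choice of first steps followed by a shorter family. -/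
def nonintersectingPathsSuccEquiv (hx : StrictMono x) :
    NonintersectingPaths step s (T + 1) x y ≃
      Σ x' : Fintype.piFinset fun m => step s (x m), NonintersectingPaths step (s + 1) T x' y where
  toFun f := ⟨⟨f.1 1, Fintype.mem_piFinset.mpr fun m => by
      simpa [f.2.1] using f.2.2.2.2 0 (by simp) m⟩,
    fun t => f.1 (t + 1), rfl, fun t ht => f.2.2.1 (t + 1) (by omega), fun t => f.2.2.2.1 (t + 1),
    fun t ht m => by simpa [add_right_comm, add_assoc] using f.2.2.2.2 (t + 1) (by omega) m⟩
  invFun g := ⟨fun t => t.casesOn x g.2.1, rfl, fun t ht => by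
      obtain ⟨t, rfl⟩ := Nat.exists_eq_succ_of_ne_zero (by omega : t ≠ 0)
      exact g.2.2.2.1 t (by omega),
    fun t => by
      cases t
      exacts [hx, g.2.2.2.2.1 _],
    fun t ht m => by
      cases t with
      | zero => simpa [g.2.2.1] using Fintype.mem_piFinset.mp g.1.2 m
      | succ t => simpa [add_right_comm, add_assoc] using g.2.2.2.2.2 t (by omega) m⟩
  left_inv f := by
    ext t : 2
    cases t
    exacts [f.2.1.symm, rfl]
  right_inv := by
    rintro ⟨⟨x', hx'⟩, ⟨g, hg, hg'⟩⟩
    obtain rfl : g 0 = x' := hg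
    rfl

theorem finite_nonintersectingPaths (s : ℕ) (x : Fin a → Λ) :
    Finite (NonintersectingPaths step s T x y) := by
  by_cases hx : StrictMono x
  · induction T generalizing s x with
    | zero =>
      by_cases hxy : x = y
      · subst hxy
        rw [nonintersectingPaths_zero_self hx]
        infer_instance
      · rw [nonintersectingPaths_zero_of_ne hxy]
        infer_instance
    | succ T ih =>
      have (x' : Fintype.piFinset fun m => step s (x m)) :
          Finite (NonintersectingPaths step (s + 1) T x' y) := by
        by_cases hx' : StrictMono x'.1
        · exact ih _ _ hx'
        · rw [nonintersectingPaths_eq_empty hx']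
          infer_instance
      exact Finite.of_equiv _ (nonintersectingPathsSuccEquiv hx).symm
  · rw [nonintersectingPaths_eq_empty hx]
    infer_instance

theorem det_numPaths_zero_of_ne (hx : StrictMono x) (hy : StrictMono y) (hxy : x ≠ y) :
    (of fun k l => numPaths step s 0 (x k) (y l)).det = 0 := by
  obtain ⟨k, hk⟩ : ∃ k, ∀ l, x k ≠ y l := by
    by_contra! h
    choose l hl using h
    have hinj : Function.Injective l := fun k k' hkk' =>
      hx.injective ((hl k).trans ((congrArg y hkk').trans (hl k').symm))
    refine hxy ((hx.range_inj hy).mp ?_)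
    rw [funext hl, ← (Finite.surjective_of_injective hinj).range_comp y]
    rfl
  exact det_eq_zero_of_row_eq_zero k fun l => if_neg (hk l)

theorem det_numPaths_succ :
    (of fun k l => numPaths step s (T + 1) (x k) (y l)).det =
      ∑ x' ∈ Fintype.piFinset fun m => step s (x m),
        (of fun k l => numPaths step (s + 1) T (x' k) (y l)).det := by
  have hrows : (of fun k l => numPaths step s (T + 1) (x k) (y l)) =
      fun k => ∑ p ∈ step s (x k), fun l => numPaths step (s + 1) T p (y l) := by
    ext k l
    simp [numPaths, Finset.sum_apply]
  rw [hrows]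
  exact (detRowAlternating (R := ℤ)).toMultilinearMap.map_sum_finset
    (fun _ p l => numPaths step (s + 1) T p (y l)) _

theorem card_nonintersectingPaths
    (hstep : ∀ s p q, p < q → ∀ p' ∈ step s p, ∀ q' ∈ step s q, p' ≤ q')
    (hx : StrictMono x) (hy : StrictMono y) :
    (Nat.card (NonintersectingPaths step s T x y) : ℤ) =
      (of fun k l => numPaths step s T (x k) (y l)).det := by
  induction T generalizing s x with
  | zero =>
    by_cases hxy : x = y
    · subst hxy
      rw [nonintersectingPaths_zero_self hx]
      have hone : (of fun k l => numPaths step s 0 (x k) (x l)) = 1 := by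
        ext k l
        simp [numPaths, one_apply, hx.injective.eq_iff]
      simp [hone]
    · simp [nonintersectingPaths_zero_of_ne hxy, det_numPaths_zero_of_ne hx hy hxy]
  | succ T ih =>
    have (x' : Fintype.piFinset fun m => step s (x m)) :
        Finite (NonintersectingPaths step (s + 1) T x' y) := finite_nonintersectingPaths _ _
    rw [Nat.card_congr (nonintersectingPathsSuccEquiv hx), Nat.card_sigma, Nat.cast_sum,
      det_numPaths_succ, ← sum_coe_sort (Fintype.piFinset fun m => step s (x m)) fun x' =>
        (of fun k l => numPaths step (s + 1) T (x' k) (y l)).det]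
    refine sum_congr rfl fun x' _ => ?_
    by_cases hx' : StrictMono x'.1
    · exact ih hx'
    have hmem := Fintype.mem_piFinset.mp x'.2
    have hmono : Monotone x'.1 := monotone_iff_forall_lt.mpr fun k l hkl =>
      hstep s _ _ (hx hkl) _ (hmem k) _ (hmem l)
    -- The paths meet after the first step: there is no such family, and two rows coincide.
    obtain ⟨k, l, hkl, hne⟩ : ∃ k l, x'.1 k = x'.1 l ∧ k ≠ l := by
      simpa [Function.Injective] using mt hmono.strictMono_of_injective hx'
    rw [nonintersectingPaths_eq_empty hx', det_zero_of_row_eq hne (by ext; simp [hkl])]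
    simp

end LindstromGesselViennot

section PathCounts

/-- The steps of the paths which encode cyclically symmetric, self-complementary plane
partitions: a nonnegative position is kept or lowered by one, a negative one is lowered by one. -/
def csscStep (_ : ℕ) (p : ℤ) : Finset ℤ := if 0 ≤ p then {p, p - 1} else {p - 1}

/-- The steps of the paths which encode totally symmetric, self-complementary plane partitions:
at time `s` the position is kept, or lowered by one if the new position exceeds `s`. -/
def tsscStep (s : ℕ) (p : ℤ) : Finset ℤ := if (s : ℤ) + 2 ≤ p then {p, p - 1} else {p}

theorem mem_csscStep {s : ℕ} {p p' : ℤ} :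
    p' ∈ csscStep s p ↔ p' = p ∧ 0 ≤ p ∨ p' = p - 1 := by
  unfold csscStep
  split_ifs <;> simp only [mem_insert, mem_singleton] <;> omega

theorem mem_tsscStep {s : ℕ} {p p' : ℤ} :
    p' ∈ tsscStep s p ↔ p' = p ∨ p' = p - 1 ∧ s + 2 ≤ p := by
  unfold tsscStep
  split_ifs <;> simp only [mem_insert, mem_singleton] <;> omega

theorem numPaths_csscStep_eq_zero {s T : ℕ} {p q : ℤ} (h : q + T < p) :
    numPaths csscStep s T p q = 0 := by
  induction T generalizing s p with
  | zero => exact if_neg (by push_cast at h; omega)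
  | succ T ih =>
    refine sum_eq_zero fun p' hp' => ih ?_
    rw [mem_csscStep] at hp'
    push_cast at h
    omega

theorem numPaths_csscStep_of_neg {s T : ℕ} {p q : ℤ} (hp : p < 0) :
    numPaths csscStep s T p q = if q + T = p then 1 else 0 := by
  induction T generalizing s p with
  | zero => simp [numPaths, eq_comm]
  | succ T ih =>
    rw [numPaths, csscStep, if_neg (by omega), sum_singleton, ih (by omega)]
    refine if_congr ?_ rfl rfl
    push_cast
    omega

theorem numPaths_csscStep {s T p j : ℕ} (hj : j < T) :
    numPaths csscStep s T p (j - T) = (j.choose p : ℤ) := by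
  induction T generalizing s p j with
  | zero => omega
  | succ T ih =>
    rw [numPaths, csscStep, if_pos (by omega), sum_pair (by omega)]
    rcases j with _ | j
    · rw [numPaths_csscStep_eq_zero (by push_cast; omega), zero_add]
      rcases p with _ | p
      · rw [numPaths_csscStep_of_neg (by simp)]
        simp
      · rw [numPaths_csscStep_eq_zero (by push_cast; omega)]
        simp
    · rw [show ((j + 1 : ℕ) : ℤ) - (T + 1 : ℕ) = j - T by push_cast; ring, ih (by omega)]
      rcases p with _ | p
      · rw [numPaths_csscStep_of_neg (by simp), if_neg (by push_cast; omega)]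
        simp
      · rw [show ((p + 1 : ℕ) : ℤ) - 1 = p by simp, ih (by omega), Nat.choose_succ_succ,
          Nat.cast_add, add_comm]

theorem numPaths_tsscStep_eq_zero {s T : ℕ} {p q : ℤ} (h : p < q) :
    numPaths tsscStep s T p q = 0 := by
  induction T generalizing s p with
  | zero => exact if_neg h.ne
  | succ T ih =>
    refine sum_eq_zero fun p' hp' => ih ?_
    rw [mem_tsscStep] at hp'
    omega

theorem numPaths_tsscStep_add {s T m : ℕ} (hm : m ≤ s + T) (d : ℕ) :
    numPaths tsscStep s T (m + d) m = ((m - s).choose d : ℤ) := by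
  induction T generalizing s d with
  | zero =>
    rw [numPaths, show m - s = 0 by omega]
    rcases d with _ | d
    · simp
    · rw [if_neg (by omega), Nat.choose_zero_succ, Nat.cast_zero]
  | succ T ih =>
    rw [numPaths, tsscStep]
    split_ifs with h
    · rw [sum_pair (by omega), ih (by omega)]
      rcases d with _ | d
      · rw [numPaths_tsscStep_eq_zero (by omega)]
        simp
      rw [show (m : ℤ) + (d + 1 : ℕ) - 1 = m + d by push_cast; ring, ih (by omega)]
      by_cases hsm : s < m
      · rw [show m - s = m - (s + 1) + 1 by omega, Nat.choose_succ_succ, Nat.cast_add, add_comm]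
      · rw [show m - s = 0 by omega, show m - (s + 1) = 0 by omega,
          Nat.choose_eq_zero_of_lt (show 0 < d by omega), Nat.cast_zero, add_zero]
    · rw [sum_singleton, ih (by omega)]
      rcases d with _ | d
      · simp
      · rw [show m - s = 0 by omega, show m - (s + 1) = 0 by omega]

theorem numPaths_tsscStep {T m : ℕ} (hm : m ≤ T) (p : ℕ) :
    numPaths tsscStep 0 T p m = (evenPoly ℤ m).coeff p := by
  rw [coeff_evenPoly]
  split_ifs with hmp
  · obtain ⟨d, rfl⟩ := Nat.exists_eq_add_of_le hmp
    simpa using numPaths_tsscStep_add (s := 0) (by omega) d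
  · exact numPaths_tsscStep_eq_zero (by omega)

/-- The pairs of complementary subsets of size `a` of `{0, …, 2a - 1}`, listed increasingly. -/
abbrev ComplementaryPairs (a : ℕ) : Type :=
  {p : (Fin a ↪o Fin (2 * a)) × (Fin a ↪o Fin (2 * a)) // ∀ k l, p.1 k ≠ p.2 l}

variable {a : ℕ}

/-- The path families which encode cyclically symmetric, self-complementary plane partitions.
All end points are made negative by a shift. -/
abbrev csscPaths (i j : Fin a ↪o Fin (2 * a)) : Set (ℕ → Fin a → ℤ) :=
  NonintersectingPaths csscStep 0 (2 * a) (fun k => ((i k : ℕ) : ℤ))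
    fun k => ((j k : ℕ) : ℤ) - (2 * a : ℕ)

/-- The path families which encode totally symmetric, self-complementary plane partitions. -/
abbrev tsscPaths (S : Fin a ↪o Fin (2 * a)) : Set (ℕ → Fin a → ℤ) :=
  NonintersectingPaths tsscStep 0 a (fun k => ((S k : ℕ) : ℤ)) fun k => ((k : ℕ) : ℤ)

theorem card_csscPaths (i j : Fin a ↪o Fin (2 * a)) :
    (Nat.card (csscPaths i j) : ℤ) = (of fun k l => ((j l : ℕ).choose (i k) : ℤ)).det := by
  rw [card_nonintersectingPaths (fun s p q hpq p' hp' q' hq' => by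
    rw [mem_csscStep] at hp' hq'; omega) (fun k l h => by simpa using h)
    fun k l h => by simpa using h]
  simp only [numPaths_csscStep (Fin.is_lt _)]

theorem card_tsscPaths (S : Fin a ↪o Fin (2 * a)) :
    (Nat.card (tsscPaths S) : ℤ) = ((evenMatrix a).submatrix id S).det := by
  rw [card_nonintersectingPaths (fun s p q hpq p' hp' q' hq' => by
    rw [mem_tsscStep] at hp' hq'; omega) (fun k l h => by simpa using h)
    fun k l h => by simpa using h, ← det_transpose]
  congr 1
  ext k l
  exact numPaths_tsscStep k.is_lt.le _

variable (a)

theorem card_sigma_csscPaths :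
    (Nat.card (Σ p : ComplementaryPairs a, csscPaths p.1.1 p.1.2) : ℤ) =
      |(evenMatrix a * (oddMatrix a)ᵀ).det| := by
  classical
  have (p : ComplementaryPairs a) : Finite (csscPaths p.1.1 p.1.2) :=
    finite_nonintersectingPaths _ _
  rw [← abs_sum_binomial_minors, ← Fintype.sum_prod_type', ← sum_filter]
  simp only [← card_csscPaths, ← Nat.cast_sum, Nat.abs_cast, Nat.card_sigma]
  exact congrArg _ (sum_subtype _ (p := fun p : (Fin a ↪o Fin (2 * a)) × (Fin a ↪o Fin (2 * a)) =>
    ∀ k l, p.1 k ≠ p.2 l) (by simp) fun p => Nat.card (csscPaths p.1 p.2)).symm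

theorem card_sigma_tsscPaths :
    (Nat.card (Σ S : Fin a ↪o Fin (2 * a), tsscPaths S) : ℤ) = sumOfMinors (evenMatrix a) := by
  have (S : Fin a ↪o Fin (2 * a)) : Finite (tsscPaths S) := finite_nonintersectingPaths _ _
  rw [Nat.card_sigma, Nat.cast_sum, sumOfMinors]
  exact sum_congr rfl fun S _ => card_tsscPaths S

theorem card_sigma_csscPaths_eq_sq :
    Nat.card (Σ p : ComplementaryPairs a, csscPaths p.1.1 p.1.2) =
      Nat.card (Σ S : Fin a ↪o Fin (2 * a), tsscPaths S) ^ 2 := by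
  have h := card_sigma_csscPaths a
  rw [← sumOfMinors_evenMatrix_sq, ← card_sigma_tsscPaths, abs_of_nonneg (by positivity)] at h
  exact_mod_cast h

end PathCounts

section Wedges

variable {n : ℕ}

/-- `IsCssc n R` says that the cells `(x, y, z)` with `R x y z` form a cyclically symmetric,
self-complementary plane partition in an `n × n × n` box. -/
structure IsCssc (n : ℕ) (R : ℕ → ℕ → ℕ → Prop) : Prop where
  mem_box {x y z} : R x y z → x < n ∧ y < n ∧ z < n
  lower {x y z x' y' z'} : R x y z → x' ≤ x → y' ≤ y → z' ≤ z → R x' y' z'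
  cycle x y z : R x y z ↔ R y z x
  compl {x y z} : x < n → y < n → z < n →
    (R x y z ↔ ¬ R (n - (x + 1)) (n - (y + 1)) (n - (z + 1)))

/-- Membership in a diagram, as a relation between natural numbers. -/
def Cells (T : Set (Fin n × Fin n × Fin n)) (x y z : ℕ) : Prop :=
  ∃ (hx : x < n) (hy : y < n) (hz : z < n), (⟨x, hx⟩, ⟨y, hy⟩, ⟨z, hz⟩) ∈ T

theorem cells_val {T : Set (Fin n × Fin n × Fin n)} {x y z : Fin n} :
    Cells T x y z ↔ (x, y, z) ∈ T :=
  ⟨fun ⟨_, _, _, h⟩ => h, fun h => ⟨x.2, y.2, z.2, h⟩⟩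

theorem Cells.isCssc {T : Set (Fin n × Fin n × Fin n)}
    (hT : IsLowerSet T ∧ ppCycle T = T ∧ ppComplement T = T) : IsCssc n (Cells T) where
  mem_box := fun ⟨hx, hy, hz, _⟩ => ⟨hx, hy, hz⟩
  lower := fun ⟨_, _, _, h⟩ hx hy hz =>
    ⟨by omega, by omega, by omega, hT.1 (Prod.mk_le_mk.mpr ⟨hx, Prod.mk_le_mk.mpr ⟨hy, hz⟩⟩) h⟩
  cycle x y z := by
    have (x y z : Fin n) : (x, y, z) ∈ T ↔ (y, z, x) ∈ T := by
      conv_lhs => rw [← hT.2.1]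
      rfl
    constructor
    · exact fun ⟨hx, hy, hz, h⟩ => ⟨hy, hz, hx, (this _ _ _).mp h⟩
    · exact fun ⟨hy, hz, hx, h⟩ => ⟨hx, hy, hz, (this _ _ _).mpr h⟩
  compl {x y z} hx hy hz := by
    have (x y z : Fin n) : (x, y, z) ∈ T ↔ (x.rev, y.rev, z.rev) ∉ T := by
      conv_lhs => rw [← hT.2.2]
      rfl
    exact cells_val.trans ((this ⟨x, hx⟩ ⟨y, hy⟩ ⟨z, hz⟩).trans (not_congr cells_val).symm)

/-- Cyclically symmetric, self-complementary plane partitions as relations between natural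
numbers. -/
def csscEquiv (n : ℕ) :
    {T : Set (Fin n × Fin n × Fin n) // IsLowerSet T ∧ ppCycle T = T ∧ ppComplement T = T} ≃
      {R // IsCssc n R} where
  toFun T := ⟨Cells T.1, Cells.isCssc T.2⟩
  invFun R := ⟨{p | R.1 p.1 p.2.1 p.2.2}, fun _ _ hle h => R.2.lower h hle.1 hle.2.1 hle.2.2,
    Set.ext fun _ => (R.2.cycle _ _ _).symm,
    Set.ext fun p => (R.2.compl p.1.2 p.2.1.2 p.2.2.2).symm⟩
  left_inv _ := Subtype.ext <| Set.ext fun _ => cells_val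
  right_inv R := Subtype.ext <| funext₃ fun _ _ _ => propext
    ⟨fun ⟨_, _, _, h⟩ => h, fun h => have ⟨hx, hy, hz⟩ := R.2.mem_box h; ⟨hx, hy, hz, h⟩⟩

theorem ppTranspose_eq_self_iff {T : Set (Fin n × Fin n × Fin n)} :
    ppTranspose T = T ↔ ∀ x y z, Cells T x y z → Cells T y x z := by
  refine ⟨fun h x y z ⟨hx, hy, hz, hT⟩ => ⟨hy, hx, hz, ?_⟩, fun h => ?_⟩
  · rwa [← h] at hT
  · have hT (x y z : Fin n) (hxyz : (x, y, z) ∈ T) : (y, x, z) ∈ T :=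
      cells_val.mp (h x y z (cells_val.mpr hxyz))
    exact Set.ext fun p => ⟨hT _ _ _, hT _ _ _⟩

/-- `IsCsscWedge n A` says that `A` is the part in the wedge `x ≤ y ≤ z` of a cyclically symmetric,
self-complementary plane partition in an `n × n × n` box. Composing the complement with a rotation
maps the face `x = y` of the wedge to its face `y = z`. -/
structure IsCsscWedge (n : ℕ) (A : ℕ → ℕ → ℕ → Prop) : Prop where
  mem_wedge {x y z} : A x y z → x ≤ y ∧ y ≤ z ∧ z < n
  lower {x y z x' y' z'} :
    A x y z → x' ≤ x → y' ≤ y → z' ≤ z → x' ≤ y' → y' ≤ z' → A x' y' z'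
  face {x z} : x ≤ z → z < n →
    (A x x z ↔ ¬ A (n - (z + 1)) (n - (x + 1)) (n - (x + 1)))

/-- The wedge of a totally symmetric plane partition is exchanged with its complement by the
rotation of the wedge. -/
def IsReflectionInvariant (n : ℕ) (A : ℕ → ℕ → ℕ → Prop) : Prop :=
  ∀ {x y z}, x ≤ y → y ≤ z → z < n → (A x y z ↔ ¬ A (n - (z + 1)) (n - (y + 1)) (n - (x + 1)))

/-- The part of a relation in the wedge `x ≤ y ≤ z`. -/
def wedge (R : ℕ → ℕ → ℕ → Prop) (x y z : ℕ) : Prop := x ≤ y ∧ y ≤ z ∧ R x y z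

theorem wedge_iff {R : ℕ → ℕ → ℕ → Prop} {x y z : ℕ} (hxy : x ≤ y) (hyz : y ≤ z) :
    wedge R x y z ↔ R x y z := by
  simp [wedge, hxy, hyz]

theorem cyclic_induction {P : ℕ → ℕ → ℕ → Prop} (hcycle : ∀ x y z, P y z x → P x y z)
    (hinc : ∀ x y z, x ≤ y → y ≤ z → P x y z) (hdec : ∀ x y z, z ≤ y → y ≤ x → P x y z)
    (x y z : ℕ) : P x y z := by
  rcases le_total x y with hxy | hxy <;> rcases le_total y z with hyz | hyz <;>
    rcases le_total x z with hxz | hxz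
  · exact hinc _ _ _ hxy hyz
  · exact hinc _ _ _ hxy hyz
  · exact hcycle _ _ _ (hdec _ _ _ hxz hyz)
  · exact hcycle _ _ _ (hcycle _ _ _ (hinc _ _ _ hxz hxy))
  · exact hcycle _ _ _ (hcycle _ _ _ (hdec _ _ _ hxy hxz))
  · exact hcycle _ _ _ (hinc _ _ _ hyz hxz)
  · exact hdec _ _ _ hyz hxy
  · exact hdec _ _ _ hyz hxy

namespace IsCssc

variable {R R' : ℕ → ℕ → ℕ → Prop}

theorem isCsscWedge (h : IsCssc n R) : IsCsscWedge n (wedge R) where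
  mem_wedge hA := ⟨hA.1, hA.2.1, (h.mem_box hA.2.2).2.2⟩
  lower hA hx hy hz hxy hyz := ⟨hxy, hyz, h.lower hA.2.2 hx hy hz⟩
  face {x z} hxz hz := by
    rw [wedge_iff le_rfl hxz, wedge_iff (by omega) le_rfl, h.compl (by omega) (by omega) hz,
      h.cycle (n - (z + 1))]

theorem eq_of_wedge_eq (h : IsCssc n R) (h' : IsCssc n R') (hw : wedge R = wedge R') : R = R' := by
  have hinc {x y z : ℕ} (hxy : x ≤ y) (hyz : y ≤ z) : R x y z ↔ R' x y z := by
    rw [← wedge_iff (R := R) hxy hyz, hw, wedge_iff hxy hyz]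
  suffices ∀ x y z, x < n ∧ y < n ∧ z < n → (R x y z ↔ R' x y z) from
    funext₃ fun x y z => propext ⟨fun hR => (this x y z (h.mem_box hR)).mp hR,
      fun hR => (this x y z (h'.mem_box hR)).mpr hR⟩
  refine cyclic_induction (fun x y z ih hbox => ?_) (fun x y z hxy hyz _ => hinc hxy hyz)
    fun x y z hzy hyx hbox => ?_
  · rw [h.cycle, h'.cycle]
    exact ih (by omega)
  · rw [h.compl (by omega) (by omega) (by omega), h'.compl (by omega) (by omega) (by omega),
      hinc (by omega) (by omega)]

theorem isReflectionInvariant_wedge_iff (h : IsCssc n R) :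
    IsReflectionInvariant n (wedge R) ↔ ∀ x y z, R x y z → R y x z := by
  have hrev (x y z : ℕ) : R y x z ↔ R z y x := (h.cycle y x z).trans (h.cycle x z y)
  rw [forall₃_congr fun x y z => imp_congr_right fun _ => hrev x y z]
  have hwedge {x y z : ℕ} (hxy : x ≤ y) (hyz : y ≤ z) (hz : z < n) :
      (wedge R x y z ↔ ¬ wedge R (n - (z + 1)) (n - (y + 1)) (n - (x + 1))) ↔
        (R x y z ↔ R z y x) := by
    rw [wedge_iff hxy hyz, wedge_iff (by omega) (by omega),
      h.compl (x := z) hz (by omega) (by omega)]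
  constructor
  · intro hA x y z hR
    have hbox := h.mem_box hR
    revert x y z
    refine cyclic_induction (fun x y z ih hR hbox => ?_) (fun x y z hxy hyz hR hbox => ?_)
      fun x y z hzy hyx hR hbox => ?_
    · exact (h.cycle x z y).mp (ih ((h.cycle x y z).mp hR) (by omega))
    · exact ((hwedge hxy hyz (by omega)).mp (hA hxy hyz (by omega))).mp hR
    · exact ((hwedge hzy hyx (by omega)).mp (hA hzy hyx (by omega))).mpr hR
  · exact fun hsymm x y z hxy hyz hz => (hwedge hxy hyz hz).mpr ⟨hsymm x y z, hsymm z y x⟩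

end IsCssc

/-- The relation with cyclic symmetry whose part in the wedge `x ≤ y ≤ z` is `A`. The triples which
are not cyclically sorted are the complements of those which are. -/
def unwedge (n : ℕ) (A : ℕ → ℕ → ℕ → Prop) (x y z : ℕ) : Prop :=
  (x < n ∧ y < n ∧ z < n) ∧
    if x ≤ y ∧ y ≤ z ∨ y ≤ z ∧ z ≤ x ∨ z ≤ x ∧ x ≤ y then A x y z ∨ A y z x ∨ A z x y
    else ¬ (A (n - (x + 1)) (n - (y + 1)) (n - (z + 1)) ∨
      A (n - (y + 1)) (n - (z + 1)) (n - (x + 1)) ∨ A (n - (z + 1)) (n - (x + 1)) (n - (y + 1)))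

theorem unwedge_cycle (A : ℕ → ℕ → ℕ → Prop) (x y z : ℕ) :
    unwedge n A x y z ↔ unwedge n A y z x := by
  refine and_congr ⟨by omega, by omega⟩ ?_
  congr! 1 <;> tauto

namespace IsCsscWedge

variable {A : ℕ → ℕ → ℕ → Prop} {x y z : ℕ}

theorem face_compl (h : IsCsscWedge n A) (hxz : x ≤ z) (hz : z < n) :
    A x z z ↔ ¬ A (n - (z + 1)) (n - (z + 1)) (n - (x + 1)) := by
  rw [h.face (by omega) (by omega), show n - (n - (x + 1) + 1) = x by omega,
    show n - (n - (z + 1) + 1) = z by omega, not_not]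

theorem unwedge_of_le (h : IsCsscWedge n A) (hxy : x ≤ y) (hyz : y ≤ z) (hz : z < n) :
    unwedge n A x y z ↔ A x y z := by
  rw [unwedge, if_pos (.inl ⟨hxy, hyz⟩)]
  refine ⟨?_, fun hA => ⟨by omega, .inl hA⟩⟩
  rintro ⟨-, hA | hA | hA⟩
  · exact hA
  all_goals
    have := h.mem_wedge hA
    obtain rfl : x = y := by omega
    obtain rfl : x = z := by omega
    exact hA

theorem unwedge_of_ge (h : IsCsscWedge n A) (hzy : z ≤ y) (hyx : y ≤ x) (hx : x < n) :
    unwedge n A x y z ↔ ¬ A (n - (x + 1)) (n - (y + 1)) (n - (z + 1)) := by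
  by_cases hzx : z = x
  · obtain rfl : y = x := by omega
    subst hzx
    rw [h.unwedge_of_le le_rfl le_rfl hx, h.face le_rfl hx]
  by_cases hzy' : z = y
  · subst hzy'
    rw [unwedge_cycle, h.unwedge_of_le le_rfl hyx hx, h.face hyx hx]
  by_cases hyx' : y = x
  · subst hyx'
    rw [unwedge_cycle, unwedge_cycle, h.unwedge_of_le hzy le_rfl hx, h.face_compl hzy hx]
  rw [unwedge, if_neg (by omega)]
  refine ⟨fun hA hA' => hA.2 (.inl hA'), fun hA => ⟨by omega, ?_⟩⟩
  rintro (hA' | hA' | hA')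
  · exact hA hA'
  all_goals
    have := h.mem_wedge hA'
    omega

theorem unwedge_of_succ (h : IsCsscWedge n A) (hA : unwedge n A x y (z + 1)) :
    unwedge n A x y z := by
  obtain ⟨hx, hy, hz⟩ := hA.1
  have lower {x y z x' y' z' : ℕ} (hA : A x y z) := h.lower (x' := x') (y' := y') (z' := z') hA
  rcases le_total x y with hxy | hyx
  · rcases lt_or_ge z x with hzx | hxz
    · rw [unwedge_cycle, unwedge_cycle, h.unwedge_of_le (by omega) hxy hy] at hA ⊢
      exact lower hA (by omega) (by omega) (by omega) (by omega) (by omega)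
    rcases lt_or_ge z y with hzy | hyz
    · rw [unwedge_cycle, h.unwedge_of_ge (by omega) (by omega) hy] at hA ⊢
      exact fun hA' => hA (lower hA' (by omega) (by omega) (by omega) (by omega) (by omega))
    · rw [h.unwedge_of_le hxy (by omega) (by omega)] at hA ⊢
      exact lower hA (by omega) (by omega) (by omega) (by omega) (by omega)
  · rcases lt_or_ge z y with hzy | hyz
    · rw [h.unwedge_of_ge (by omega) hyx hx] at hA ⊢
      exact fun hA' => hA (lower hA' (by omega) (by omega) (by omega) (by omega) (by omega))
    rcases lt_or_ge z x with hzx | hxz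
    · rw [unwedge_cycle, h.unwedge_of_le (by omega) (by omega) hx] at hA ⊢
      exact lower hA (by omega) (by omega) (by omega) (by omega) (by omega)
    · rw [unwedge_cycle, unwedge_cycle, h.unwedge_of_ge hyx (by omega) (by omega)] at hA ⊢
      exact fun hA' => hA (lower hA' (by omega) (by omega) (by omega) (by omega) (by omega))

theorem unwedge_of_le_right (h : IsCsscWedge n A) {z' : ℕ} (hz : z' ≤ z)
    (hA : unwedge n A x y z) : unwedge n A x y z' :=
  Nat.decreasingInduction (motive := fun z' _ => unwedge n A x y z')
    (fun _ _ => h.unwedge_of_succ) hA hz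

theorem isCssc_unwedge (h : IsCsscWedge n A) : IsCssc n (unwedge n A) where
  mem_box hA := hA.1
  lower hA hx hy hz := by
    have hA := unwedge_cycle _ _ _ _ |>.mp (h.unwedge_of_le_right hz hA)
    have hA := unwedge_cycle _ _ _ _ |>.mp (h.unwedge_of_le_right hx hA)
    exact unwedge_cycle _ _ _ _ |>.mp (h.unwedge_of_le_right hy hA)
  cycle := unwedge_cycle A
  compl {x y z} hx hy hz := by
    have hbox : x < n ∧ y < n ∧ z < n := ⟨hx, hy, hz⟩
    clear hx hy hz
    revert hbox
    revert x y z
    refine @(cyclic_induction (fun x y z ih hbox => ?_) (fun x y z hxy hyz hbox => ?_)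
      fun x y z hzy hyx hbox => ?_)
    · rw [unwedge_cycle, unwedge_cycle A (n - (x + 1))]
      exact ih (by omega)
    · rw [h.unwedge_of_le hxy hyz hbox.2.2, h.unwedge_of_ge (by omega) (by omega) (by omega),
        not_not, show n - (n - (x + 1) + 1) = x by omega, show n - (n - (y + 1) + 1) = y by omega,
        show n - (n - (z + 1) + 1) = z by omega]
    · rw [h.unwedge_of_ge hzy hyx hbox.1, h.unwedge_of_le (by omega) (by omega) (by omega)]

theorem wedge_unwedge (h : IsCsscWedge n A) : wedge (unwedge n A) = A :=
  funext₃ fun _ _ _ => propext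
    ⟨fun ⟨hxy, hyz, hA⟩ => (h.unwedge_of_le hxy hyz hA.1.2.2).mp hA, fun hA =>
      have ⟨hxy, hyz, hz⟩ := h.mem_wedge hA
      ⟨hxy, hyz, (h.unwedge_of_le hxy hyz hz).mpr hA⟩⟩

end IsCsscWedge

/-- A cyclically symmetric, self-complementary plane partition is determined by its wedge. -/
def wedgeEquiv (n : ℕ) : {R // IsCssc n R} ≃ {A // IsCsscWedge n A} where
  toFun R := ⟨wedge R.1, R.2.isCsscWedge⟩
  invFun A := ⟨unwedge n A.1, A.2.isCssc_unwedge⟩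
  left_inv R := Subtype.ext <|
    R.2.isCsscWedge.isCssc_unwedge.eq_of_wedge_eq R.2 R.2.isCsscWedge.wedge_unwedge
  right_inv A := Subtype.ext A.2.wedge_unwedge

theorem card_cssc (n : ℕ) :
    Nat.card {T : Set (Fin n × Fin n × Fin n) //
        IsLowerSet T ∧ ppCycle T = T ∧ ppComplement T = T} =
      Nat.card {A // IsCsscWedge n A} :=
  Nat.card_congr ((csscEquiv n).trans (wedgeEquiv n))

theorem card_tssc (n : ℕ) :
    Nat.card {T : Set (Fin n × Fin n × Fin n) //
        IsLowerSet T ∧ ppTranspose T = T ∧ ppCycle T = T ∧ ppComplement T = T} =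
      Nat.card {A // IsCsscWedge n A ∧ IsReflectionInvariant n A} := by
  let e := (csscEquiv n).trans (wedgeEquiv n)
  have htranspose T : ppTranspose T.1 = T.1 ↔ IsReflectionInvariant n (e T).1 :=
    ppTranspose_eq_self_iff.trans (csscEquiv n T).2.isReflectionInvariant_wedge_iff.symm
  refine Nat.card_congr (Trans.trans (Trans.trans (Equiv.subtypeEquivRight fun T => ?_)
    (Equiv.subtypeSubtypeEquivSubtypeInter _ (fun T => ppTranspose T = T)).symm)
      ((e.subtypeEquiv htranspose).trans (Equiv.subtypeSubtypeEquivSubtypeInter _ _)))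
  tauto

end Wedges

section Slices

variable {a : ℕ}

/-- The first natural number at which a predicate fails (`0` if there is none). -/
noncomputable def threshold (P : ℕ → Prop) : ℕ := sInf {x | ¬ P x}

theorem lt_threshold_iff {P : ℕ → Prop} (hP : ∀ x y, x ≤ y → P y → P x) {b : ℕ} (hb : ¬ P b)
    {x : ℕ} : x < threshold P ↔ P x := by
  refine ⟨fun h => not_not.mp (Nat.notMem_of_lt_sInf h), fun h => ?_⟩
  by_contra! hx
  exact Nat.sInf_mem (s := {x | ¬ P x}) ⟨b, hb⟩ (hP _ _ hx h)

theorem eq_of_forall_add_lt_iff {p q b : ℤ} (hp : p ≤ b) (hq : q ≤ b)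
    (h : ∀ x : ℕ, x + p < b ↔ x + q < b) : p = q := by
  have := h (b - p).toNat
  have := h (b - q).toNat
  omega

theorem exists_orderEmbedding_fin {n : ℕ} {g : Fin a → ℤ} (hg : StrictMono g) (h0 : ∀ k, 0 ≤ g k)
    (hn : ∀ k, g k < n) : ∃ S : Fin a ↪o Fin n, ∀ k, ((S k : ℕ) : ℤ) = g k :=
  ⟨OrderEmbedding.ofStrictMono
    (fun k => ⟨(g k).toNat, (Int.toNat_lt (h0 k)).mpr (hn k)⟩) fun k l hkl => by
      have := hg hkl
      have := h0 k
      exact Fin.mk_lt_mk.mpr (by omega),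
    fun k => Int.toNat_of_nonneg (h0 k)⟩

theorem mem_nonintersectingPaths_of_forall_step {Λ : Type*} [LinearOrder Λ]
    {step : ℕ → Λ → Finset Λ} {T : ℕ} {F : ℕ → Fin a → Λ} (hF : ∀ t, StrictMono (F t))
    (hstep : ∀ t < T, ∀ m, F (t + 1) m ∈ step t (F t m)) :
    (fun t => F (min t T)) ∈ NonintersectingPaths step 0 T (F 0) (F T) := by
  refine ⟨by simp, fun t ht => by simp [ht], fun t => hF _, fun t ht m => ?_⟩
  simpa [Nat.min_eq_left ht, Nat.min_eq_left ht.le] using hstep t ht m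

/-- Families of strictly separated paths which in each step stay or descend by one. -/
structure IsDescending (f : ℕ → Fin a → ℤ) : Prop where
  add_sub_le (t : ℕ) {k l : Fin a} : k ≤ l → f t k + (l - k) ≤ f t l
  le (m : Fin a) {s t : ℕ} : s ≤ t → f t m ≤ f s m
  le_add_sub (m : Fin a) {s t : ℕ} : s ≤ t → f s m ≤ f t m + (t - s)

theorem add_sub_le_of_strictMono {g : Fin a → ℤ} (hg : StrictMono g) {k l : Fin a} (hkl : k ≤ l) :
    g k + (l - k) ≤ g l := by
  obtain ⟨k, hk⟩ := k
  obtain ⟨l, hl⟩ := l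
  rw [Fin.mk_le_mk] at hkl
  induction l, hkl using Nat.le_induction with
  | base => simp
  | succ l _ ih =>
    have := ih (by omega)
    have : g ⟨l, by omega⟩ < g ⟨l + 1, hl⟩ := hg (Fin.mk_lt_mk.mpr l.lt_succ_self)
    push_cast at *
    omega

theorem isDescending_of_mem {step : ℕ → ℤ → Finset ℤ} {T : ℕ} {x y : Fin a → ℤ}
    {f : ℕ → Fin a → ℤ} (hstep : ∀ s p, ∀ p' ∈ step s p, p' = p ∨ p' = p - 1)
    (hf : f ∈ NonintersectingPaths step 0 T x y) : IsDescending f := by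
  have hsucc (t : ℕ) (m : Fin a) : f (t + 1) m = f t m ∨ f (t + 1) m = f t m - 1 := by
    rcases lt_or_ge t T with ht | ht
    · exact hstep _ _ _ (hf.2.2.2 t ht m)
    · rw [hf.2.1 t ht, hf.2.1 (t + 1) (by omega)]
      exact .inl rfl
  refine ⟨fun t => add_sub_le_of_strictMono (hf.2.2.1 t), fun m {s t} hst => ?_,
    fun m {s t} hst => ?_⟩ <;>
  induction t, hst using Nat.le_induction with
  | base => simp
  | succ t _ ih =>
    have := hsucc t m
    push_cast
    omega

/-- The region bounded by a path family: in the slice `z = a + m`, the point `x` of the diagonal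
`y - x = s` lies in it iff `x < a + m - s - f s m`. The slices `z < a` are full. -/
def Slices (f : ℕ → Fin a → ℤ) (x y z : ℕ) : Prop :=
  ∀ m : Fin a, z = a + m → f (y - x) m < z - y

theorem slices_of_lt {f : ℕ → Fin a → ℤ} {z : ℕ} (hz : z < a) (x y : ℕ) : Slices f x y z :=
  fun m hm => by omega

theorem slices_add_iff {f : ℕ → Fin a → ℤ} {x y : ℕ} {m : Fin a} :
    Slices f x y (a + m) ↔ f (y - x) m + y < a + m := by
  refine ⟨fun h => ?_, fun h m' hm' => ?_⟩
  · have := h m rfl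
    push_cast at this
    omega
  · obtain rfl : m = m' := Fin.ext (by omega)
    push_cast
    omega

theorem exists_fin_add_eq {z : ℕ} (hz : a ≤ z) (hz2 : z < 2 * a) : ∃ m : Fin a, a + m = z :=
  ⟨⟨z - a, by omega⟩, Nat.add_sub_cancel' hz⟩

theorem IsDescending.slices_lower {f : ℕ → Fin a → ℤ} (hf : IsDescending f) {x y z x' y' z' : ℕ}
    (h : Slices f x y z) (hx : x' ≤ x) (hy : y' ≤ y) (hz : z' ≤ z) (hxy : x ≤ y) (hxy' : x' ≤ y')
    (hz2 : z < 2 * a) : Slices f x' y' z' := by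
  intro m' hm'
  obtain ⟨m, rfl⟩ := exists_fin_add_eq (show a ≤ z by omega) hz2
  have := slices_add_iff.mp h
  have := hf.le m (show y - x ≤ y - x' by omega)
  have := hf.add_sub_le (y - x') (show m' ≤ m from Fin.le_def.mpr (by omega))
  have := hf.le_add_sub m' (show y' - x' ≤ y - x' by omega)
  omega

namespace IsCsscWedge

variable {A : ℕ → ℕ → ℕ → Prop} {x y z : ℕ}

theorem lt_of_mem (h : IsCsscWedge (2 * a) A) (hA : A x y z) : x < a := by
  have := h.mem_wedge hA
  have hface := (h.face (by omega) (by omega)).mp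
    (h.lower hA le_rfl this.1 le_rfl le_rfl (by omega))
  by_contra! hx
  exact hface (h.lower hA (by omega) (by omega) (by omega) (by omega) le_rfl)

theorem of_lt (h : IsCsscWedge (2 * a) A) (hxy : x ≤ y) (hyz : y ≤ z) (hz : z < a) : A x y z :=
  h.lower ((h.face le_rfl (by omega)).mpr fun hA => by have := h.lt_of_mem hA; omega)
    (by omega) hyz le_rfl hxy hyz

end IsCsscWedge

end Slices

section CsscPaths

variable {a : ℕ} {p : ComplementaryPairs a} {f : ℕ → Fin a → ℤ}

theorem isDescending_of_mem_csscPaths (hf : f ∈ csscPaths p.1.1 p.1.2) : IsDescending f :=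
  isDescending_of_mem (fun s p p' h => by rw [mem_csscStep] at h; tauto) hf

theorem eq_sub_of_mem_csscPaths_of_neg (hf : f ∈ csscPaths p.1.1 p.1.2) {s t : ℕ} {m : Fin a}
    (hst : s ≤ t) (ht : t ≤ 2 * a) (hneg : f s m < 0) : f t m = f s m - (t - s) := by
  induction t, hst using Nat.le_induction with
  | base => simp
  | succ t _ ih =>
    have hstep := hf.2.2.2 t (by omega) m
    rw [mem_csscStep, ih (by omega)] at hstep
    push_cast
    omega

theorem sub_le_of_mem_csscPaths (hf : f ∈ csscPaths p.1.1 p.1.2) (s : ℕ) (m : Fin a) :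
    m - s ≤ f s m := by
  have hd := isDescending_of_mem_csscPaths hf
  have hsep := hd.add_sub_le 0 (show ⟨0, m.pos⟩ ≤ m from Fin.le_def.mpr (Nat.zero_le _))
  have hstep := hd.le_add_sub m s.zero_le
  have hstart := congrFun hf.1 ⟨0, m.pos⟩
  push_cast at *
  omega

theorem le_of_mem_csscPaths (hf : f ∈ csscPaths p.1.1 p.1.2) {s : ℕ} (hs : s ≤ 2 * a)
    (m : Fin a) : f s m ≤ a + m - s := by
  have hd := isDescending_of_mem_csscPaths hf
  have hm := m.2
  have hsep := hd.add_sub_le (2 * a)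
    (show m ≤ ⟨a - 1, by omega⟩ from Fin.le_def.mpr (Nat.le_sub_one_of_lt hm))
  have hstep := hd.le_add_sub m hs
  have hend := congrFun (hf.2.1 (2 * a) le_rfl) ⟨a - 1, by omega⟩
  push_cast at *
  omega

/-- The region encoded by a path family, which is the wedge of a cyclically symmetric,
self-complementary plane partition. -/
def csscWedge (f : ℕ → Fin a → ℤ) (x y z : ℕ) : Prop :=
  x ≤ y ∧ y ≤ z ∧ z < 2 * a ∧ Slices f x y z

theorem csscWedge_edge_iff {x : ℕ} {m : Fin a} :
    csscWedge f x (a + m) (a + m) ↔ x ≤ a + m ∧ f (a + m - x) m < 0 := by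
  have := m.2
  simp only [csscWedge, slices_add_iff, Nat.cast_add]
  omega

theorem csscWedge_face (hf : f ∈ csscPaths p.1.1 p.1.2) {x z : ℕ} (hxz : x ≤ z) (hz : z < 2 * a) :
    csscWedge f x x z ↔
      ¬ csscWedge f (2 * a - (z + 1)) (2 * a - (x + 1)) (2 * a - (x + 1)) := by
  have hle := sub_le_of_mem_csscPaths hf
  rcases le_or_gt a x with hxa | hxa
  · obtain ⟨k, rfl⟩ := exists_fin_add_eq (hxa.trans hxz) hz
    refine iff_of_false (fun h => ?_) (not_not.mpr
      ⟨by omega, le_rfl, by omega, slices_of_lt (by omega) _ _⟩)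
    have := slices_add_iff.mp h.2.2.2
    have := hle (x - x) k
    omega
  obtain ⟨l, hl⟩ := exists_fin_add_eq (show a ≤ 2 * a - (x + 1) by omega) (by omega)
  rw [← hl, csscWedge_edge_iff]
  rcases lt_or_ge z a with hza | hza
  · refine iff_of_true ⟨le_rfl, hxz, hz, slices_of_lt hza _ _⟩ fun h => ?_
    have := hle (a + l - (2 * a - (z + 1))) l
    omega
  obtain ⟨k, rfl⟩ := exists_fin_add_eq hza hz
  -- The gluing condition for the faces `x = y` and `y = z` is the complementarity of `i` and `j`.
  have hglue := le_iff_add_lt p.2 k l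
  have hstart := congrFun hf.1 k
  have hend := congrFun (hf.2.1 (2 * a) le_rfl) l
  have hneg := eq_sub_of_mem_csscPaths_of_neg hf (show k + l + 1 ≤ 2 * a by omega) le_rfl (m := l)
  have hstep := (isDescending_of_mem_csscPaths hf).le_add_sub l (show k + l + 1 ≤ 2 * a by omega)
  rw [show a + l - (2 * a - (a + k + 1)) = k + l + 1 by omega, csscWedge, slices_add_iff,
    Nat.sub_self]
  push_cast at *
  omega

theorem isCsscWedge_csscWedge (hf : f ∈ csscPaths p.1.1 p.1.2) :
    IsCsscWedge (2 * a) (csscWedge f) where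
  mem_wedge h := ⟨h.1, h.2.1, h.2.2.1⟩
  lower h hx hy hz hxy hyz := ⟨hxy, hyz, hz.trans_lt h.2.2.1,
    (isDescending_of_mem_csscPaths hf).slices_lower h.2.2.2 hx hy hz h.1 hxy h.2.2.1⟩
  face := csscWedge_face hf

theorem csscWedge_min_iff (hf : f ∈ csscPaths p.1.1 p.1.2) {s : ℕ} (hs : s ≤ 2 * a) (m : Fin a)
    (x : ℕ) : csscWedge f x (min (x + s) (a + m)) (a + m) ↔ x + f s m < a + m - s := by
  have hm := m.2
  rw [csscWedge, slices_add_iff]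
  rcases le_or_gt (x + s) (a + m) with hxs | hxs
  · rw [min_eq_left hxs, Nat.add_sub_cancel_left]
    push_cast
    omega
  rw [min_eq_right hxs.le]
  rcases le_or_gt x (a + m) with hx | hx
  · have hneg := eq_sub_of_mem_csscPaths_of_neg hf (show a + m - x ≤ s by omega) hs (m := m)
    have hstep :=
      (isDescending_of_mem_csscPaths hf).le_add_sub m (show a + m - x ≤ s by omega)
    push_cast at *
    omega
  · have := sub_le_of_mem_csscPaths hf s m
    omega

theorem csscWedge_injective {p p' : ComplementaryPairs a} {f f' : ℕ → Fin a → ℤ}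
    (hf : f ∈ csscPaths p.1.1 p.1.2) (hf' : f' ∈ csscPaths p'.1.1 p'.1.2)
    (h : csscWedge f = csscWedge f') : f = f' := by
  have heq (s : ℕ) (hs : s ≤ 2 * a) : f s = f' s := by
    ext m
    refine eq_of_forall_add_lt_iff (b := a + m - s) (le_of_mem_csscPaths hf hs m)
      (le_of_mem_csscPaths hf' hs m) fun x => ?_
    rw [← csscWedge_min_iff hf hs, ← csscWedge_min_iff hf' hs, h]
  ext s m
  rcases le_total s (2 * a) with hs | hs
  · rw [heq s hs]
  · rw [hf.2.1 s hs, hf'.2.1 s hs, ← hf.2.1 _ le_rfl, ← hf'.2.1 _ le_rfl, heq _ le_rfl]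

end CsscPaths

section OfCsscWedge

variable {a : ℕ} {A : ℕ → ℕ → ℕ → Prop}

/-- The number of points of `A` on the diagonal `y - x = s` of the slice `z = a + m`, the diagonal
being continued along the edge `y = z`. -/
noncomputable def csscDiagonal (A : ℕ → ℕ → ℕ → Prop) (s : ℕ) (m : Fin a) : ℕ :=
  threshold fun x => A x (min (x + s) (a + m)) (a + m)

namespace IsCsscWedge

theorem lt_csscDiagonal_iff (h : IsCsscWedge (2 * a) A) {s x : ℕ} {m : Fin a} :
    x < csscDiagonal A s m ↔ A x (min (x + s) (a + m)) (a + m) :=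
  lt_threshold_iff (P := fun x => A x (min (x + s) (a + m)) (a + m)) (fun x y hxy hA => by
    have := h.mem_wedge hA
    exact h.lower hA hxy (by omega) le_rfl (by omega) (by omega))
    fun hA => (h.lt_of_mem hA).false

theorem csscDiagonal_le (h : IsCsscWedge (2 * a) A) (s : ℕ) (m : Fin a) : csscDiagonal A s m ≤ a :=
  le_of_forall_lt fun _ hx => h.lt_of_mem (h.lt_csscDiagonal_iff.mp hx)

theorem csscDiagonal_antitone (h : IsCsscWedge (2 * a) A) (s : ℕ) :
    Antitone (csscDiagonal A s : Fin a → ℕ) := by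
  refine fun m m' hm => le_of_forall_lt fun x hx => ?_
  rw [h.lt_csscDiagonal_iff] at hx ⊢
  have := h.lt_of_mem hx
  rw [Fin.le_def] at hm
  exact h.lower hx le_rfl (by omega) (by omega) (by omega) (by omega)

theorem csscDiagonal_succ_le (h : IsCsscWedge (2 * a) A) (s : ℕ) (m : Fin a) :
    csscDiagonal A (s + 1) m ≤ csscDiagonal A s m := by
  refine le_of_forall_lt fun x hx => ?_
  rw [h.lt_csscDiagonal_iff] at hx ⊢
  have := h.lt_of_mem hx
  exact h.lower hx le_rfl (by omega) le_rfl (by omega) (by omega)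

theorem csscDiagonal_le_succ (h : IsCsscWedge (2 * a) A) (s : ℕ) (m : Fin a) :
    csscDiagonal A s m ≤ csscDiagonal A (s + 1) m + 1 := by
  by_contra! hlt
  rw [h.lt_csscDiagonal_iff] at hlt
  refine (h.lt_csscDiagonal_iff (x := csscDiagonal A (s + 1) m).mpr ?_).false
  have := h.lt_of_mem hlt
  exact h.lower hlt (by omega) (by omega) le_rfl (by omega) (by omega)

theorem csscDiagonal_le_succ_of_lt (h : IsCsscWedge (2 * a) A) {s : ℕ} {m : Fin a}
    (hs : a + m < s + csscDiagonal A s m) : csscDiagonal A s m ≤ csscDiagonal A (s + 1) m := by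
  refine le_of_forall_lt fun x hx => h.lt_csscDiagonal_iff.mpr ?_
  have hlast : A (csscDiagonal A s m - 1) (min (csscDiagonal A s m - 1 + s) (a + m)) (a + m) :=
    h.lt_csscDiagonal_iff.mp (by omega)
  have := h.csscDiagonal_le s m
  exact h.lower hlast (by omega) (by omega) le_rfl (by omega) (by omega)

theorem csscDiagonal_face (h : IsCsscWedge (2 * a) A) (k l : Fin a) :
    a - 1 - l < csscDiagonal A 0 k ↔ ¬ a - 1 - k < csscDiagonal A (2 * a) l := by
  have hk := k.2
  have hl := l.2
  rw [h.lt_csscDiagonal_iff, h.lt_csscDiagonal_iff, min_eq_left (by omega), add_zero,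
    h.face (by omega) (by omega), min_eq_right (by omega),
    show 2 * a - (a + k + 1) = a - 1 - k by omega, show 2 * a - (a - 1 - l + 1) = a + l by omega]

end IsCsscWedge

/-- The path family which encodes the wedge `A`. -/
noncomputable def csscPath (A : ℕ → ℕ → ℕ → Prop) (s : ℕ) (m : Fin a) : ℤ :=
  a + m - s - csscDiagonal A s m

theorem csscPath_mem_csscStep (h : IsCsscWedge (2 * a) A) (s : ℕ) (m : Fin a) :
    csscPath A (s + 1) m ∈ csscStep s (csscPath A s m) := by
  have := h.csscDiagonal_succ_le s m
  have := h.csscDiagonal_le_succ s m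
  have := h.csscDiagonal_le_succ_of_lt (s := s) (m := m)
  rw [mem_csscStep, csscPath, csscPath]
  push_cast
  omega

theorem strictMono_csscPath (h : IsCsscWedge (2 * a) A) (s : ℕ) :
    StrictMono (csscPath A s : Fin a → ℤ) := fun m m' hm => by
  have := h.csscDiagonal_antitone s hm.le
  rw [Fin.lt_def] at hm
  rw [csscPath, csscPath]
  omega

theorem exists_csscPaths (h : IsCsscWedge (2 * a) A) : ∃ p : ComplementaryPairs a,
    (fun t => csscPath A (min t (2 * a))) ∈ csscPaths p.1.1 p.1.2 := by
  have hle := h.csscDiagonal_le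
  obtain ⟨i, hi⟩ := exists_orderEmbedding_fin (n := 2 * a) (strictMono_csscPath h 0)
    (fun k => by have := hle 0 k; rw [csscPath]; push_cast; omega)
    fun k => by rw [csscPath]; push_cast; omega
  obtain ⟨j, hj⟩ := exists_orderEmbedding_fin (n := 2 * a)
    ((strictMono_csscPath h (2 * a)).add_const (2 * a))
    (fun l => by have := hle (2 * a) l; rw [csscPath]; push_cast; omega)
    fun l => by rw [csscPath]; push_cast; omega
  refine ⟨⟨⟨i, j⟩, fun k l hkl => ?_⟩, ?_⟩
  · have hface := h.csscDiagonal_face k l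
    have hik := hi k
    have hjl := hj l
    rw [csscPath] at hik hjl
    rw [hkl] at hik
    push_cast at *
    omega
  · simp only [csscPaths, hi, hj, Nat.cast_mul, Nat.cast_ofNat, add_sub_cancel_right]
    exact mem_nonintersectingPaths_of_forall_step (strictMono_csscPath h)
      fun t _ => csscPath_mem_csscStep h t

theorem csscWedge_csscPath (h : IsCsscWedge (2 * a) A) :
    csscWedge (fun t => csscPath A (min t (2 * a)) : ℕ → Fin a → ℤ) = A := by
  refine funext₃ fun x y z => propext ?_
  by_cases hxyz : x ≤ y ∧ y ≤ z ∧ z < 2 * a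
  swap
  · exact iff_of_false (fun h' => hxyz ⟨h'.1, h'.2.1, h'.2.2.1⟩) fun hA => hxyz (h.mem_wedge hA)
  obtain ⟨hxy, hyz, hz⟩ := hxyz
  simp only [csscWedge, hxy, hyz, hz, true_and]
  rcases lt_or_ge z a with hza | hza
  · exact iff_of_true (slices_of_lt hza _ _) (h.of_lt hxy hyz hza)
  obtain ⟨m, rfl⟩ := exists_fin_add_eq hza hz
  have hdiag := h.lt_csscDiagonal_iff (s := y - x) (x := x) (m := m)
  rw [Nat.add_sub_cancel' hxy, min_eq_left hyz] at hdiag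
  rw [slices_add_iff, ← hdiag, min_eq_left (by omega), csscPath]
  omega

theorem card_sigma_csscPaths_eq_card_wedge (a : ℕ) :
    Nat.card (Σ p : ComplementaryPairs a, csscPaths p.1.1 p.1.2) =
      Nat.card {A // IsCsscWedge (2 * a) A} := by
  refine Nat.card_eq_of_bijective
    (fun f => ⟨csscWedge f.2.1, isCsscWedge_csscWedge f.2.2⟩) ⟨?_, fun ⟨A, hA⟩ => ?_⟩
  · rintro ⟨⟨⟨i, j⟩, hij⟩, f, hf⟩ ⟨⟨⟨i', j'⟩, hij'⟩, f', hf'⟩ h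
    obtain rfl : f = f' := csscWedge_injective (p := ⟨⟨i, j⟩, hij⟩) (p' := ⟨⟨i', j'⟩, hij'⟩)
      hf hf' (congrArg Subtype.val h)
    obtain rfl : i = i' := by
      ext k
      simpa using congrFun (hf.1.symm.trans hf'.1) k
    obtain rfl : j = j' := by
      ext k
      simpa using congrFun ((hf.2.1 _ le_rfl).symm.trans (hf'.2.1 _ le_rfl)) k
    rfl
  · obtain ⟨p, hp⟩ := exists_csscPaths hA
    exact ⟨⟨p, _, hp⟩, Subtype.ext (csscWedge_csscPath hA)⟩

end OfCsscWedge

section TsscPaths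

variable {a : ℕ} {S : Fin a ↪o Fin (2 * a)} {f : ℕ → Fin a → ℤ}

theorem isDescending_of_mem_tsscPaths (hf : f ∈ tsscPaths S) : IsDescending f :=
  isDescending_of_mem (fun s p p' h => by rw [mem_tsscStep] at h; tauto) hf

theorem eq_of_mem_tsscPaths_of_le (hf : f ∈ tsscPaths S) {m : Fin a} {t : ℕ} (hm : m ≤ t) :
    f t m = m := by
  rcases le_total a t with ht | ht
  · exact congrFun (hf.2.1 t ht) m
  induction ht using Nat.decreasingInduction with
  | self => exact congrFun (hf.2.1 a le_rfl) m
  | of_succ t ht ih =>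
    have hstep := hf.2.2.2 t ht m
    rw [mem_tsscStep, ih (by omega)] at hstep
    push_cast at hstep
    omega

theorem le_of_mem_tsscPaths (hf : f ∈ tsscPaths S) (s : ℕ) (m : Fin a) : m ≤ f s m := by
  rw [← eq_of_mem_tsscPaths_of_le hf (le_max_right s m)]
  exact (isDescending_of_mem_tsscPaths hf).le m (le_max_left s m)

theorem le_max_of_mem_tsscPaths (hf : f ∈ tsscPaths S) (s : ℕ) (m : Fin a) :
    f s m ≤ max (m : ℤ) (2 * m - s) := by
  rcases le_total (m : ℕ) s with hs | hs
  · exact (eq_of_mem_tsscPaths_of_le hf hs).le.trans (le_max_left _ _)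
  · have := (isDescending_of_mem_tsscPaths hf).le_add_sub m hs
    rw [eq_of_mem_tsscPaths_of_le hf le_rfl] at this
    omega

theorem slices_of_mem_tsscPaths (hf : f ∈ tsscPaths S) {x y z : ℕ} (hxy : x ≤ y) (hy : y < a)
    (hxz : x + z < 2 * a) : Slices f x y z := by
  rcases lt_or_ge z a with hza | hza
  · exact slices_of_lt hza _ _
  obtain ⟨m, rfl⟩ := exists_fin_add_eq hza (by omega)
  have := le_max_of_mem_tsscPaths hf (y - x) m
  rw [slices_add_iff]
  omega

/-- The region encoded by a path family, which is the wedge of a totally symmetric,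
self-complementary plane partition: the half `y < a` is bounded by the paths, and the other half is
its reflected complement. -/
def tsscWedge (f : ℕ → Fin a → ℤ) (x y z : ℕ) : Prop :=
  x ≤ y ∧ y ≤ z ∧ z < 2 * a ∧
    if y < a then Slices f x y z
    else ¬ Slices f (2 * a - (z + 1)) (2 * a - (y + 1)) (2 * a - (x + 1))

theorem tsscWedge_iff_of_lt {x y z : ℕ} (hxy : x ≤ y) (hyz : y ≤ z) (hz : z < 2 * a)
    (hy : y < a) : tsscWedge f x y z ↔ Slices f x y z := by
  simp only [tsscWedge, hxy, hyz, hz, hy, if_true, true_and]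

theorem tsscWedge_iff_of_ge {x y z : ℕ} (hxy : x ≤ y) (hyz : y ≤ z) (hz : z < 2 * a)
    (hy : a ≤ y) :
    tsscWedge f x y z ↔ ¬ Slices f (2 * a - (z + 1)) (2 * a - (y + 1)) (2 * a - (x + 1)) := by
  simp only [tsscWedge, hxy, hyz, hz, hy.not_gt, if_false, true_and]

theorem isReflectionInvariant_tsscWedge (f : ℕ → Fin a → ℤ) :
    IsReflectionInvariant (2 * a) (tsscWedge f) := by
  intro x y z hxy hyz hz
  rcases lt_or_ge y a with hy | hy
  · rw [tsscWedge_iff_of_lt hxy hyz hz hy,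
      tsscWedge_iff_of_ge (by omega) (by omega) (by omega) (by omega), not_not,
      show 2 * a - (2 * a - (x + 1) + 1) = x by omega,
      show 2 * a - (2 * a - (y + 1) + 1) = y by omega,
      show 2 * a - (2 * a - (z + 1) + 1) = z by omega]
  · rw [tsscWedge_iff_of_ge hxy hyz hz hy,
      tsscWedge_iff_of_lt (by omega) (by omega) (by omega) (by omega)]

theorem isCsscWedge_tsscWedge (hf : f ∈ tsscPaths S) : IsCsscWedge (2 * a) (tsscWedge f) where
  mem_wedge h := ⟨h.1, h.2.1, h.2.2.1⟩
  lower {x y z x' y' z'} h hx hy hz hxy hyz := by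
    have hd := isDescending_of_mem_tsscPaths hf
    obtain ⟨hxy₀, hyz₀, hz₀, h⟩ := h
    refine ⟨hxy, hyz, by omega, ?_⟩
    split_ifs at h ⊢ with hya' hya hya
    · exact hd.slices_lower h hx hy hz hxy₀ hxy hz₀
    · have hxz : x + z < 2 * a := by
        contrapose! h
        exact slices_of_mem_tsscPaths hf (by omega) (by omega) (by omega)
      exact slices_of_mem_tsscPaths hf hxy hya' (by omega)
    · omega
    · exact fun h' => h (hd.slices_lower h' (by omega) (by omega) (by omega) (by omega) (by omega)
        (by omega))
  face hxz hz := isReflectionInvariant_tsscWedge f le_rfl hxz hz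

theorem tsscWedge_add_iff (hf : f ∈ tsscPaths S) (s : ℕ) (m : Fin a) (x : ℕ) :
    x + s < a ∧ tsscWedge f x (x + s) (a + m) ↔ x + f s m < a + m - s := by
  have hm := m.2
  have hle := le_of_mem_tsscPaths hf s m
  by_cases hxs : x + s < a
  · rw [tsscWedge_iff_of_lt (by omega) (by omega) (by omega) hxs, slices_add_iff,
      Nat.add_sub_cancel_left]
    push_cast
    omega
  · exact iff_of_false (fun h => hxs h.1) (by omega)

theorem tsscWedge_injective {S S' : Fin a ↪o Fin (2 * a)} {f f' : ℕ → Fin a → ℤ}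
    (hf : f ∈ tsscPaths S) (hf' : f' ∈ tsscPaths S') (h : tsscWedge f = tsscWedge f') : f = f' := by
  ext s m
  have hm := m.2
  rcases le_total (m : ℕ) s with hs | hs
  · rw [eq_of_mem_tsscPaths_of_le hf hs, eq_of_mem_tsscPaths_of_le hf' hs]
  have hle := le_max_of_mem_tsscPaths hf s m
  have hle' := le_max_of_mem_tsscPaths hf' s m
  refine eq_of_forall_add_lt_iff (b := a + m - s) (by omega) (by omega) fun x => ?_
  rw [← tsscWedge_add_iff hf, ← tsscWedge_add_iff hf', h]

end TsscPaths

section OfTsscWedge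

variable {a : ℕ} {A : ℕ → ℕ → ℕ → Prop}

/-- The number of points of `A` with `y < a` on the diagonal `y - x = s` of the slice
`z = a + m`. -/
noncomputable def tsscDiagonal (A : ℕ → ℕ → ℕ → Prop) (s : ℕ) (m : Fin a) : ℕ :=
  threshold fun x => x + s < a ∧ A x (x + s) (a + m)

theorem IsReflectionInvariant.of_lt (hr : IsReflectionInvariant (2 * a) A)
    (h : IsCsscWedge (2 * a) A) {x y z : ℕ} (hxy : x ≤ y) (hyz : y ≤ z) (hy : y < a)
    (hxz : x + z < 2 * a) : A x y z := by
  by_contra hA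
  exact hA (h.lower (not_not.mp (mt (hr hxy hyz (by omega)).mpr hA)) (by omega) (by omega)
    (by omega) hxy hyz)

namespace IsCsscWedge

theorem lt_tsscDiagonal_iff (h : IsCsscWedge (2 * a) A) {s x : ℕ} {m : Fin a} :
    x < tsscDiagonal A s m ↔ x + s < a ∧ A x (x + s) (a + m) :=
  lt_threshold_iff (P := fun x => x + s < a ∧ A x (x + s) (a + m)) (fun x y hxy hA =>
    ⟨by omega, h.lower hA.2 hxy (by omega) le_rfl (by omega) (by omega)⟩) (b := a) (by omega)

theorem tsscDiagonal_le (h : IsCsscWedge (2 * a) A) (s : ℕ) (m : Fin a) :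
    tsscDiagonal A s m ≤ a - s :=
  le_of_forall_lt fun _ hx => by have := h.lt_tsscDiagonal_iff.mp hx; omega

theorem tsscDiagonal_antitone (h : IsCsscWedge (2 * a) A) (s : ℕ) :
    Antitone (tsscDiagonal A s : Fin a → ℕ) := by
  refine fun m m' hm => le_of_forall_lt fun x hx => ?_
  rw [h.lt_tsscDiagonal_iff] at hx ⊢
  rw [Fin.le_def] at hm
  exact ⟨hx.1, h.lower hx.2 le_rfl le_rfl (by omega) (by omega) (by omega)⟩

theorem tsscDiagonal_succ_le (h : IsCsscWedge (2 * a) A) (s : ℕ) (m : Fin a) :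
    tsscDiagonal A (s + 1) m ≤ tsscDiagonal A s m := by
  refine le_of_forall_lt fun x hx => ?_
  rw [h.lt_tsscDiagonal_iff] at hx ⊢
  exact ⟨by omega, h.lower hx.2 le_rfl (by omega) le_rfl (by omega) (by omega)⟩

theorem tsscDiagonal_le_succ (h : IsCsscWedge (2 * a) A) (s : ℕ) (m : Fin a) :
    tsscDiagonal A s m ≤ tsscDiagonal A (s + 1) m + 1 := by
  by_contra! hlt
  rw [h.lt_tsscDiagonal_iff] at hlt
  refine (h.lt_tsscDiagonal_iff (x := tsscDiagonal A (s + 1) m).mpr ⟨by omega, ?_⟩).false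
  exact h.lower hlt.2 (by omega) (by omega) le_rfl (by omega) (by omega)

theorem min_le_tsscDiagonal (h : IsCsscWedge (2 * a) A) (hr : IsReflectionInvariant (2 * a) A)
    (s : ℕ) (m : Fin a) : min (a - s) (a - m) ≤ tsscDiagonal A s m :=
  le_of_forall_lt fun _ hx => h.lt_tsscDiagonal_iff.mpr
    ⟨by omega, hr.of_lt h (by omega) (by omega) (by omega) (by omega)⟩

end IsCsscWedge

/-- The path family which encodes the reflection-invariant wedge `A`. -/
noncomputable def tsscPath (A : ℕ → ℕ → ℕ → Prop) (s : ℕ) (m : Fin a) : ℤ :=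
  a + m - s - tsscDiagonal A s m

theorem tsscPath_mem_tsscStep (h : IsCsscWedge (2 * a) A) (hr : IsReflectionInvariant (2 * a) A)
    {s : ℕ} (hs : s < a) (m : Fin a) :
    tsscPath A (s + 1) m ∈ tsscStep s (tsscPath A s m) := by
  have := h.tsscDiagonal_succ_le s m
  have := h.tsscDiagonal_le_succ s m
  have := h.tsscDiagonal_le (s + 1) m
  have := h.min_le_tsscDiagonal hr s m
  rw [mem_tsscStep, tsscPath, tsscPath]
  push_cast
  omega

theorem strictMono_tsscPath (h : IsCsscWedge (2 * a) A) (s : ℕ) :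
    StrictMono (tsscPath A s : Fin a → ℤ) := fun m m' hm => by
  have := h.tsscDiagonal_antitone s hm.le
  rw [Fin.lt_def] at hm
  rw [tsscPath, tsscPath]
  omega

theorem exists_tsscPaths (h : IsCsscWedge (2 * a) A) (hr : IsReflectionInvariant (2 * a) A) :
    ∃ S : Fin a ↪o Fin (2 * a), (fun t => tsscPath A (min t a)) ∈ tsscPaths S := by
  obtain ⟨S, hS⟩ := exists_orderEmbedding_fin (n := 2 * a) (strictMono_tsscPath h 0)
    (fun k => by have := h.tsscDiagonal_le 0 k; rw [tsscPath]; push_cast; omega)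
    fun k => by rw [tsscPath]; push_cast; omega
  have hend (k : Fin a) : ((k : ℕ) : ℤ) = tsscPath A a k := by
    have := h.tsscDiagonal_le a k
    rw [tsscPath]
    omega
  refine ⟨S, ?_⟩
  simp only [tsscPaths, hS, hend]
  exact mem_nonintersectingPaths_of_forall_step (strictMono_tsscPath h)
    fun t ht => tsscPath_mem_tsscStep h hr ht

theorem slices_tsscPath_iff (h : IsCsscWedge (2 * a) A) {x y z : ℕ} (hxy : x ≤ y) (hyz : y ≤ z)
    (hz : z < 2 * a) (hy : y < a) :
    Slices (fun t => tsscPath A (min t a) : ℕ → Fin a → ℤ) x y z ↔ A x y z := by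
  rcases lt_or_ge z a with hza | hza
  · exact iff_of_true (slices_of_lt hza _ _) (h.of_lt hxy hyz hza)
  obtain ⟨m, rfl⟩ := exists_fin_add_eq hza hz
  have hdiag := h.lt_tsscDiagonal_iff (s := y - x) (x := x) (m := m)
  rw [Nat.add_sub_cancel' hxy, and_iff_right hy] at hdiag
  rw [slices_add_iff, ← hdiag, min_eq_left (by omega), tsscPath]
  omega

theorem tsscWedge_tsscPath (h : IsCsscWedge (2 * a) A) (hr : IsReflectionInvariant (2 * a) A) :
    tsscWedge (fun t => tsscPath A (min t a) : ℕ → Fin a → ℤ) = A := by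
  refine funext₃ fun x y z => propext ?_
  by_cases hxyz : x ≤ y ∧ y ≤ z ∧ z < 2 * a
  swap
  · exact iff_of_false (fun h' => hxyz ⟨h'.1, h'.2.1, h'.2.2.1⟩) fun hA => hxyz (h.mem_wedge hA)
  obtain ⟨hxy, hyz, hz⟩ := hxyz
  simp only [tsscWedge, hxy, hyz, hz, true_and]
  split_ifs with hy
  · exact slices_tsscPath_iff h hxy hyz hz hy
  · rw [slices_tsscPath_iff h (by omega) (by omega) (by omega) (by omega), hr hxy hyz hz]

theorem card_sigma_tsscPaths_eq_card_wedge (a : ℕ) :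
    Nat.card (Σ S : Fin a ↪o Fin (2 * a), tsscPaths S) =
      Nat.card {A // IsCsscWedge (2 * a) A ∧ IsReflectionInvariant (2 * a) A} := by
  refine Nat.card_eq_of_bijective (fun f => ⟨tsscWedge f.2.1,
    isCsscWedge_tsscWedge f.2.2, isReflectionInvariant_tsscWedge _⟩) ⟨?_, fun ⟨A, hA, hr⟩ => ?_⟩
  · rintro ⟨S, f, hf⟩ ⟨S', f', hf'⟩ h
    obtain rfl : f = f' := tsscWedge_injective hf hf' (congrArg Subtype.val h)
    obtain rfl : S = S' := by
      ext k
      simpa using congrFun (hf.1.symm.trans hf'.1) k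
    rfl
  · obtain ⟨S, hS⟩ := exists_tsscPaths hA hr
    exact ⟨⟨S, _, hS⟩, Subtype.ext (tsscWedge_tsscPath hA hr)⟩

end OfTsscWedge

end CSSC

/-- Equation (1.4): `CSSC(2a,2a,2a) = TSSC(2a,2a,2a)²`.
Plane partitions in the box are identified with lower sets of
`{0,…,2a−1}³` with the (componentwise) product order.  A lower set is totally symmetric
iff it is both symmetric (equal to its transpose) and cyclically symmetric. -/
theorem cssc_eq_tssc_sq (a : ℕ) :
    Nat.card {T : Set (Fin (2 * a) × Fin (2 * a) × Fin (2 * a)) //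
        IsLowerSet T ∧ ppCycle T = T ∧ ppComplement T = T}
      = Nat.card {T : Set (Fin (2 * a) × Fin (2 * a) × Fin (2 * a)) //
          IsLowerSet T ∧ ppTranspose T = T ∧ ppCycle T = T ∧ ppComplement T = T} ^ 2 := by
  rw [CSSC.card_cssc, CSSC.card_tssc, ← CSSC.card_sigma_csscPaths_eq_card_wedge,
    ← CSSC.card_sigma_tsscPaths_eq_card_wedge, CSSC.card_sigma_csscPaths_eq_sq]
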